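/- arXiv:1606.09445 — 2 statements merged into one kernel-verified Lean document; each statement's English description precedes it below -/
import Mathlib

section
/- Let x ∈ L_+ with x ∉ [0,c] (i.e., it is not the case that both x ∈ L_+ and c − x ∈ L_+), with normal form x = a_1 e_1 + ⋯ + a_n e_n + a c, and assume gcd(p_i, a_i) = 1 for all 1 ≤ i ≤ n (so in particular 1 ≤ a_i ≤ p_i − 1). Set R := S^x. Then for every j ∈ {1,…,n} and every integer u with 0 ≤ u ≤ p_j, the R-module S(u e_j)^x satisfies Ext^1_R(S(u e_j)^x, R) = 0 if and only if u ∈ I(p_j, p_j − a_j). -/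
set_option synthInstance.maxHeartbeats 1000000
set_option maxHeartbeats 1000000
noncomputable section

open MvPolynomial

def LRel (ι : Type) [DecidableEq ι] (p : ι → ℕ) : AddSubgroup (Option ι → ℤ) :=
  AddSubgroup.closure
    { v | ∃ i : ι, v = (p i : ℤ) • Pi.single (some i) 1 - Pi.single (none : Option ι) 1 }

abbrev LGroup (ι : Type) [DecidableEq ι] (p : ι → ℕ) : Type :=
  (Option ι → ℤ) ⧸ LRel ι p

def egen {ι : Type} [DecidableEq ι] (p : ι → ℕ) (i : ι) : LGroup ι p :=
  QuotientAddGroup.mk (Pi.single (some i) 1)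

def cgen {ι : Type} [DecidableEq ι] (p : ι → ℕ) : LGroup ι p :=
  QuotientAddGroup.mk (Pi.single (none : Option ι) 1)

def Lplus {ι : Type} [DecidableEq ι] (p : ι → ℕ) : AddSubmonoid (LGroup ι p) :=
  AddSubmonoid.closure (Set.range (egen p))

abbrev SPoly (ι : Type) : Type := MvPolynomial (ι ⊕ Fin 2) ℂ

def SIdl (ι : Type) (p : ι → ℕ) (c0 c1 : ι → ℂ) : Ideal (SPoly ι) :=
  Ideal.span { f | ∃ i : ι,
    f = X (Sum.inl i) ^ (p i) - (C (c0 i) * X (Sum.inr 0) + C (c1 i) * X (Sum.inr 1)) }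

abbrev SAlg (ι : Type) (p : ι → ℕ) (c0 c1 : ι → ℂ) : Type := SPoly ι ⧸ SIdl ι p c0 c1

def wtA {ι : Type} [Fintype ι] [DecidableEq ι] (p : ι → ℕ) (m : (ι ⊕ Fin 2) →₀ ℕ) :
    LGroup ι p :=
  (∑ i : ι, m (Sum.inl i) • egen p i) + (m (Sum.inr 0) + m (Sum.inr 1)) • cgen p

def polyCompA {ι : Type} [Fintype ι] [DecidableEq ι] (p : ι → ℕ) (y : LGroup ι p) :
    Submodule ℂ (SPoly ι) where
  carrier := { f | ∀ m, coeff m f ≠ 0 → wtA p m = y }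
  add_mem' := by
    intro f g hf hg m hm
    by_cases h : coeff m f = 0
    · refine hg m fun h' => hm ?_
      simp [coeff_add, h, h']
    · exact hf m h
  zero_mem' := by
    intro m hm
    simp at hm
  smul_mem' := by
    intro c f hf m hm
    refine hf m fun h => hm ?_
    simp [coeff_smul, h]

def SCompA {ι : Type} [Fintype ι] [DecidableEq ι] (p : ι → ℕ) (c0 c1 : ι → ℂ)
    (y : LGroup ι p) : Submodule ℂ (SAlg ι p c0 c1) :=
  (polyCompA p y).map (Ideal.Quotient.mkₐ ℂ (SIdl ι p c0 c1)).toLinearMap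

def SVerA {ι : Type} [Fintype ι] [DecidableEq ι] (p : ι → ℕ) (c0 c1 : ι → ℂ)
    (x : LGroup ι p) : Submodule ℂ (SAlg ι p c0 c1) :=
  ⨆ k : ℤ, SCompA p c0 c1 (k • x)

def SShiftA {ι : Type} [Fintype ι] [DecidableEq ι] (p : ι → ℕ) (c0 c1 : ι → ℂ)
    (y x : LGroup ι p) : Submodule ℂ (SAlg ι p c0 c1) :=
  ⨆ k : ℤ, SCompA p c0 c1 (y + k • x)

/-- The `i`-series of the Hirzebruch–Jung continued fraction expansion of `r/a`:
`i₀ = r`, `i₁ = a`, and `i_{t+1}` is the unique integer with `0 ≤ i_{t+1} < i_t` and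
`i_{t+1} ≡ −i_{t−1} (mod i_t)` (after the sequence reaches `0` it stays `0`). -/
def iSeq (r a : ℕ) : ℕ → ℕ
  | 0 => r
  | 1 => a
  | (t + 2) =>
      if iSeq r a (t + 1) = 0 then 0
      else (((-(iSeq r a t : ℤ)) % (iSeq r a (t + 1) : ℤ)).toNat)

/-- `I(r,a)`: the set of all terms of the `i`-series of `r/a`. -/
def ISet (r a : ℕ) : Set ℕ := Set.range (iSeq r a)


section LG

variable {ι : Type} [Fintype ι] [DecidableEq ι] {p : ι → ℕ}

lemma p_smul_egen (i : ι) : p i • egen p i = cgen p := by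
  have h : ((p i : ℤ) • Pi.single (some i) 1 - Pi.single (none : Option ι) 1 : Option ι → ℤ)
      ∈ LRel ι p := AddSubgroup.subset_closure ⟨i, rfl⟩
  have h2 := (QuotientAddGroup.eq_zero_iff _).2 h
  rw [QuotientAddGroup.mk_sub, sub_eq_zero, QuotientAddGroup.mk_zsmul] at h2
  rw [← natCast_zsmul]
  exact h2

/-- Universal property of `L`. -/
def lHom {A : Type} [AddCommGroup A] (v : ι → A) (c : A) (h : ∀ i, p i • v i = c) :
    LGroup ι p →+ A :=
  QuotientAddGroup.lift (LRel ι p)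
    ({ toFun := fun f => (∑ i, f (some i) • v i) + f none • c
       map_zero' := by simp
       map_add' := by
        intro f g
        simp only [Pi.add_apply, add_smul, Finset.sum_add_distrib]
        abel } : (Option ι → ℤ) →+ A)
    (by
      rw [LRel, AddSubgroup.closure_le]
      rintro _ ⟨i, rfl⟩
      rw [SetLike.mem_coe, AddMonoidHom.mem_ker]
      change (∑ k, (((p i : ℤ) • Pi.single (some i) 1 - Pi.single (none : Option ι) 1 :
        Option ι → ℤ) (some k)) • v k) + (((p i : ℤ) • Pi.single (some i) 1
          - Pi.single (none : Option ι) 1 : Option ι → ℤ) none) • c = 0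
      rw [Finset.sum_eq_single i]
      · simp [← h i]
      · intro b _ hb
        simp [Pi.single_apply, hb]
      · simp)

lemma lHom_egen {A : Type} [AddCommGroup A] (v : ι → A) (c : A) (h : ∀ i, p i • v i = c) (i : ι) :
    lHom v c h (egen p i) = v i := by
  change (∑ k, ((Pi.single (some i) 1 : Option ι → ℤ) (some k)) • v k)
    + ((Pi.single (some i) 1 : Option ι → ℤ) none) • c = _
  rw [Finset.sum_eq_single i]
  · simp
  · intro b _ hb
    simp [Pi.single_apply, hb]
  · simp

lemma lHom_cgen {A : Type} [AddCommGroup A] (v : ι → A) (c : A) (h : ∀ i, p i • v i = c) :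
    lHom v c h (cgen p) = c := by
  change (∑ k, ((Pi.single (none : Option ι) 1 : Option ι → ℤ) (some k)) • v k)
    + ((Pi.single (none : Option ι) 1 : Option ι → ℤ) none) • c = _
  simp

/-- The residue at `j`. -/
def lRes (p : ι → ℕ) (j : ι) : LGroup ι p →+ ZMod (p j) :=
  lHom (fun i => if i = j then 1 else 0) 0 (by
    intro i
    by_cases h : i = j
    · subst h; simp
    · simp [h])

lemma lRes_egen_self (j : ι) : lRes p j (egen p j) = 1 := by
  rw [lRes, lHom_egen]; simp

lemma lRes_egen_ne (i j : ι) (h : i ≠ j) : lRes p j (egen p i) = 0 := by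
  rw [lRes, lHom_egen]; simp [h]

lemma lRes_cgen (j : ι) : lRes p j (cgen p) = 0 := by
  rw [lRes, lHom_cgen]

/-- The degree. -/
def lDeg (p : ι → ℕ) (hp : ∀ i, 2 ≤ p i) : LGroup ι p →+ ℚ :=
  lHom (fun i => (p i : ℚ)⁻¹) 1 (by
    intro i
    have : (p i : ℚ) ≠ 0 := by have := hp i; positivity
    simp [this])

lemma wtA_zero : wtA p 0 = 0 := by simp [wtA]

lemma wtA_add (m m' : (ι ⊕ Fin 2) →₀ ℕ) : wtA p (m + m') = wtA p m + wtA p m' := by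
  simp only [wtA, Finsupp.add_apply, add_smul, Finset.sum_add_distrib]
  abel

/-- Degrees of the variables. -/
def degX (p : ι → ℕ) : ι ⊕ Fin 2 → LGroup ι p := Sum.elim (egen p) (fun _ => cgen p)

lemma wtA_single (s : ι ⊕ Fin 2) : wtA p (Finsupp.single s 1) = degX p s := by
  rcases s with i | k
  · simp only [wtA, degX, Sum.elim_inl]
    rw [Finset.sum_eq_single i]
    · simp
    · intro b _ hb
      rw [Finsupp.single_apply, if_neg (by simpa using hb.symm), zero_smul]
    · simp
  · fin_cases k <;> simp [wtA, degX]

/-- Uniqueness of normal forms (for monomials). -/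
lemma wtA_unique (hp : ∀ i, 2 ≤ p i) (m m' : (ι ⊕ Fin 2) →₀ ℕ) (h : wtA p m = wtA p m') :
    (∀ i, m (Sum.inl i) % p i = m' (Sum.inl i) % p i) ∧
    (∑ i, m (Sum.inl i) / p i) + (m (Sum.inr 0) + m (Sum.inr 1)) =
      (∑ i, m' (Sum.inl i) / p i) + (m' (Sum.inr 0) + m' (Sum.inr 1)) := by
  have hr : ∀ (m : (ι ⊕ Fin 2) →₀ ℕ) j, lRes p j (wtA p m) = (m (Sum.inl j) : ZMod (p j)) := by
    intro m j
    rw [wtA, map_add, map_nsmul, lRes_cgen, smul_zero, add_zero, map_sum,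
      Finset.sum_eq_single j]
    · rw [map_nsmul, lRes_egen_self]; simp
    · intro b _ hb
      rw [map_nsmul, lRes_egen_ne b j hb, smul_zero]
    · simp
  have hd : ∀ (m : (ι ⊕ Fin 2) →₀ ℕ), lDeg p hp (wtA p m) =
      (∑ i, ((m (Sum.inl i) % p i : ℕ) : ℚ) / p i) +
        (((∑ i, m (Sum.inl i) / p i) + (m (Sum.inr 0) + m (Sum.inr 1)) : ℕ) : ℚ) := by
    intro m
    rw [wtA, map_add, map_nsmul, map_sum]
    simp only [map_nsmul]
    simp only [lDeg, lHom_egen, lHom_cgen]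
    push_cast
    rw [← add_assoc, ← Finset.sum_add_distrib]
    simp only [nsmul_eq_mul, mul_one]
    push_cast
    congr 1
    refine Finset.sum_congr rfl fun i _ => ?_
    have h0 : (p i : ℚ) ≠ 0 := by have := hp i; positivity
    have := Nat.mod_add_div (m (Sum.inl i)) (p i)
    have h1 : ((m (Sum.inl i) % p i : ℕ) : ℚ) + p i * ((m (Sum.inl i) / p i : ℕ) : ℚ)
      = m (Sum.inl i) := by exact_mod_cast this
    rw [← h1]
    field_simp
  have h1 : ∀ i, m (Sum.inl i) % p i = m' (Sum.inl i) % p i := by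
    intro i
    have := congrArg (lRes p i) h
    rw [hr, hr] at this
    exact (ZMod.natCast_eq_natCast_iff _ _ _).1 this
  refine ⟨h1, ?_⟩
  have := congrArg (lDeg p hp) h
  rw [hd, hd] at this
  simp only [h1] at this
  exact_mod_cast add_left_cancel this

lemma egen_mem (i : ι) : egen p i ∈ Lplus p := AddSubmonoid.subset_closure ⟨i, rfl⟩

lemma cgen_mem (j : ι) : cgen p ∈ Lplus p := by
  rw [← p_smul_egen j]; exact nsmul_mem (egen_mem j) _

lemma wtA_mem (j : ι) (m : (ι ⊕ Fin 2) →₀ ℕ) : wtA p m ∈ Lplus p :=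
  add_mem (sum_mem fun i _ => nsmul_mem (egen_mem i) _) (nsmul_mem (cgen_mem j) _)

/-- The submonoid generated by `c` and the `e_i`, `i ≠ j`. -/
def Hj (p : ι → ℕ) (j : ι) : AddSubmonoid (LGroup ι p) :=
  AddSubmonoid.closure (insert (cgen p) {z | ∃ i, i ≠ j ∧ z = egen p i})

lemma cgen_memH (j : ι) : cgen p ∈ Hj p j := AddSubmonoid.subset_closure (Or.inl rfl)

lemma egen_memH (i j : ι) (h : i ≠ j) : egen p i ∈ Hj p j :=
  AddSubmonoid.subset_closure (Or.inr ⟨i, h, rfl⟩)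

lemma Hj_le (j : ι) : Hj p j ≤ Lplus p := by
  rw [Hj, AddSubmonoid.closure_le]
  rintro z (rfl | ⟨i, _, rfl⟩)
  · exact cgen_mem j
  · exact egen_mem i

lemma lRes_Hj (j : ι) (z : LGroup ι p) (hz : z ∈ Hj p j) : lRes p j z = 0 := by
  have : Hj p j ≤ AddMonoidHom.mker (lRes p j) := by
    rw [Hj, AddSubmonoid.closure_le]
    rintro z (rfl | ⟨i, hi, rfl⟩)
    · exact lRes_cgen j
    · exact lRes_egen_ne i j hi
  exact this hz

lemma sub_mem_Hj (j : ι) (z : LGroup ι p) (hz : z ∈ Lplus p) (s : ℕ) (hs : s < p j)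
    (hr : lRes p j z = s) : z - s • egen p j ∈ Hj p j := by
  obtain ⟨k, z', hz', rfl⟩ : ∃ (k : ℕ) (z' : LGroup ι p), z' ∈ Hj p j ∧
      z = k • egen p j + z' := by
    clear hr
    induction hz using AddSubmonoid.closure_induction with
    | mem z h =>
      obtain ⟨i, rfl⟩ := h
      by_cases h : i = j
      · subst h; exact ⟨1, 0, zero_mem _, by simp⟩
      · exact ⟨0, _, egen_memH i j h, by simp⟩
    | zero => exact ⟨0, 0, zero_mem _, by simp⟩
    | add a b _ _ ha hb =>
      obtain ⟨k, z, hz, rfl⟩ := ha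
      obtain ⟨k', z', hz', rfl⟩ := hb
      exact ⟨k + k', z + z', add_mem hz hz', by rw [add_smul]; abel⟩
  rw [map_add, map_nsmul, lRes_egen_self, lRes_Hj j z' hz', add_zero, nsmul_eq_mul, mul_one] at hr
  have h1 := (ZMod.natCast_eq_natCast_iff _ _ _).1 hr
  have h2 : k % p j = s := by rw [h1, Nat.mod_eq_of_lt hs]
  have h3 : k = s + (k / p j) * p j := by
    have := Nat.mod_add_div k (p j)
    rw [h2, mul_comm] at this
    exact this.symm
  have : k • egen p j + z' - s • egen p j = (k / p j) • cgen p + z' := by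
    conv_lhs => rw [h3]
    rw [add_smul, mul_smul, p_smul_egen]
    abel
  rw [this]
  exact add_mem (nsmul_mem (cgen_memH j) _) hz'

lemma exists_nc_sub (j : ι) (hp : ∀ i, 2 ≤ p i) (z : LGroup ι p) (hz : z ∈ Lplus p) :
    ∃ N0 : ℕ, ∀ N, N0 ≤ N → N • cgen p - z ∈ Lplus p := by
  have : ∃ N0 : ℕ, N0 • cgen p - z ∈ Lplus p := by
    induction hz using AddSubmonoid.closure_induction with
    | mem z h =>
      obtain ⟨i, rfl⟩ := h
      refine ⟨1, ?_⟩
      have : 1 • cgen p - egen p i = (p i - 1) • egen p i := by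
        rw [← p_smul_egen i, one_smul, sub_eq_iff_eq_add, ← succ_nsmul]
        congr 1
        have := hp i; omega
      rw [this]; exact nsmul_mem (egen_mem i) _
    | zero => exact ⟨0, by simp⟩
    | add a b _ _ ha hb =>
      obtain ⟨k, hk⟩ := ha
      obtain ⟨k', hk'⟩ := hb
      refine ⟨k + k', ?_⟩
      have := add_mem hk hk'
      rwa [show k • cgen p - a + (k' • cgen p - b) = (k + k') • cgen p - (a + b) by
        rw [add_smul]; abel] at this
  obtain ⟨N0, h⟩ := this
  refine ⟨N0, fun N hN => ?_⟩
  have := add_mem h (nsmul_mem (cgen_mem j) (N - N0))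
  rwa [sub_add_eq_add_sub, ← add_smul, Nat.add_sub_cancel' hN] at this

lemma exists_prod_smul (z : LGroup ι p) (hz : z ∈ Lplus p) :
    ∃ N : ℕ, (∏ i, p i) • z = N • cgen p := by
  induction hz using AddSubmonoid.closure_induction with
  | mem z h =>
    obtain ⟨i, rfl⟩ := h
    refine ⟨∏ k ∈ Finset.univ.erase i, p k, ?_⟩
    rw [← Finset.prod_erase_mul _ _ (Finset.mem_univ i), mul_smul, p_smul_egen]
  | zero => exact ⟨0, by simp⟩
  | add a b _ _ ha hb =>
    obtain ⟨k, hk⟩ := ha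
    obtain ⟨k', hk'⟩ := hb
    exact ⟨k + k', by rw [nsmul_add, hk, hk', add_smul]⟩

end LG

section SF

variable {ι : Type} [Fintype ι] [DecidableEq ι] {p : ι → ℕ} {c0 c1 : ι → ℂ}

/-- The quotient map. -/
def sMk (p : ι → ℕ) (c0 c1 : ι → ℂ) : SPoly ι →ₐ[ℂ] SAlg ι p c0 c1 :=
  Ideal.Quotient.mkₐ ℂ (SIdl ι p c0 c1)

lemma sMk_surj : Function.Surjective (sMk p c0 c1) := Ideal.Quotient.mkₐ_surjective _ _

lemma sMk_eq_zero (q : SPoly ι) : sMk p c0 c1 q = 0 ↔ q ∈ SIdl ι p c0 c1 :=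
  Ideal.Quotient.eq_zero_iff_mem

lemma mem_SComp {y : LGroup ι p} {s : SAlg ι p c0 c1} :
    s ∈ SCompA p c0 c1 y ↔ ∃ q ∈ polyCompA p y, sMk p c0 c1 q = s := by
  rw [SCompA, Submodule.mem_map]; rfl

lemma monomial_mem_polyComp (m : (ι ⊕ Fin 2) →₀ ℕ) (c : ℂ) :
    monomial m c ∈ polyCompA p (wtA p m) := by
  intro m' hm'
  rw [coeff_monomial] at hm'
  split_ifs at hm' with h
  · rw [h]
  · exact absurd rfl hm'

lemma polyComp_eq_span (y : LGroup ι p) :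
    polyCompA p y = Submodule.span ℂ {q | ∃ m, wtA p m = y ∧ q = monomial m 1} := by
  apply le_antisymm
  · intro q hq
    rw [q.as_sum]
    refine sum_mem fun m hm => ?_
    have h1 : monomial m (coeff m q) = coeff m q • (monomial m 1 : SPoly ι) := by
      rw [smul_monomial, smul_eq_mul, mul_one]
    rw [h1]
    exact Submodule.smul_mem _ _ (Submodule.subset_span ⟨m, hq m (by simpa using hm), rfl⟩)
  · rw [Submodule.span_le]
    rintro _ ⟨m, rfl, rfl⟩
    exact monomial_mem_polyComp m 1

lemma polyComp_mul {y z : LGroup ι p} {q r : SPoly ι} (hq : q ∈ polyCompA p y)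
    (hr : r ∈ polyCompA p z) : q * r ∈ polyCompA p (y + z) := by
  have : polyCompA p y * polyCompA p z ≤ polyCompA p (y + z) := by
    rw [polyComp_eq_span y, polyComp_eq_span z, Submodule.span_mul_span, Submodule.span_le]
    rintro _ ⟨_, ⟨m, rfl, rfl⟩, _, ⟨m', rfl, rfl⟩, rfl⟩
    simp only [monomial_mul, mul_one]
    rw [← wtA_add]
    exact monomial_mem_polyComp _ 1
  exact this (Submodule.mul_mem_mul hq hr)

lemma SComp_mul {y z : LGroup ι p} {q r : SAlg ι p c0 c1} (hq : q ∈ SCompA p c0 c1 y)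
    (hr : r ∈ SCompA p c0 c1 z) : q * r ∈ SCompA p c0 c1 (y + z) := by
  obtain ⟨q, h, rfl⟩ := mem_SComp.1 hq
  obtain ⟨r, h', rfl⟩ := mem_SComp.1 hr
  exact mem_SComp.2 ⟨q * r, polyComp_mul h h', map_mul _ _ _⟩

lemma SComp_one : (1 : SAlg ι p c0 c1) ∈ SCompA p c0 c1 0 := by
  refine mem_SComp.2 ⟨1, ?_, map_one _⟩
  have := monomial_mem_polyComp (p := p) 0 1
  rwa [wtA_zero] at this

lemma X_mem_polyComp (s : ι ⊕ Fin 2) : (X s : SPoly ι) ∈ polyCompA p (degX p s) := by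
  rw [← wtA_single]; exact monomial_mem_polyComp _ 1

lemma sX_mem (s : ι ⊕ Fin 2) : sMk p c0 c1 (X s) ∈ SCompA p c0 c1 (degX p s) :=
  mem_SComp.2 ⟨_, X_mem_polyComp s, rfl⟩

/-- The linear form. -/
def lin (c0 c1 : ι → ℂ) (i : ι) : SPoly ι :=
  C (c0 i) * X (Sum.inr 0) + C (c1 i) * X (Sum.inr 1)

lemma sX_pow (i : ι) : sMk p c0 c1 (X (Sum.inl i)) ^ (p i) = sMk p c0 c1 (lin c0 c1 i) := by
  rw [← sub_eq_zero, ← map_pow, ← map_sub, sMk_eq_zero]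
  exact Ideal.subset_span ⟨i, rfl⟩

lemma lin_mem (k0 k1 : ℂ) : (C k0 * X (Sum.inr 0) + C k1 * X (Sum.inr 1) : SPoly ι)
    ∈ polyCompA p (cgen p) := by
  rw [← smul_eq_C_mul, ← smul_eq_C_mul]
  exact add_mem (Submodule.smul_mem _ _ (X_mem_polyComp (p := p) (Sum.inr 0)))
    (Submodule.smul_mem _ _ (X_mem_polyComp (p := p) (Sum.inr 1)))

lemma rel_mem (i : ι) : (X (Sum.inl i) ^ (p i) -
    (C (c0 i) * X (Sum.inr 0) + C (c1 i) * X (Sum.inr 1)) : SPoly ι)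
    ∈ polyCompA p (cgen p) := by
  refine sub_mem ?_ (lin_mem _ _)
  have h : ∀ k : ℕ, (X (Sum.inl i) : SPoly ι) ^ k ∈ polyCompA p (k • egen p i) := by
    intro k
    induction k with
    | zero =>
      have := monomial_mem_polyComp (p := p) 0 1
      rw [wtA_zero] at this
      simpa using this
    | succ k ih => rw [pow_succ, succ_nsmul]; exact polyComp_mul ih (X_mem_polyComp (Sum.inl i))
  have := h (p i)
  rwa [p_smul_egen] at this

open Classical in
/-- Projection on the polynomial ring. -/
def polyProj (p : ι → ℕ) (Q : LGroup ι p → Prop) : SPoly ι →ₗ[ℂ] SPoly ι :=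
  (basisMonomials (ι ⊕ Fin 2) ℂ).constr ℂ (fun m => if Q (wtA p m) then monomial m 1 else 0)

lemma polyProj_of {Q : LGroup ι p → Prop} {z : LGroup ι p} (h : Q z) {q : SPoly ι}
    (hq : q ∈ polyCompA p z) : polyProj p Q q = q := by
  have : polyCompA p z ≤ LinearMap.eqLocus (polyProj p Q) LinearMap.id := by
    rw [polyComp_eq_span, Submodule.span_le]
    rintro _ ⟨m, rfl, rfl⟩
    have h1 := (basisMonomials (ι ⊕ Fin 2) ℂ).constr_basis ℂ
      (fun m => open Classical in if Q (wtA p m) then (monomial m 1 : SPoly ι) else 0) m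
    rw [if_pos h, coe_basisMonomials] at h1
    exact h1
  exact this hq

lemma polyProj_not {Q : LGroup ι p → Prop} {z : LGroup ι p} (h : ¬ Q z) {q : SPoly ι}
    (hq : q ∈ polyCompA p z) : polyProj p Q q = 0 := by
  have : polyCompA p z ≤ LinearMap.ker (polyProj p Q) := by
    rw [polyComp_eq_span, Submodule.span_le]
    rintro _ ⟨m, rfl, rfl⟩
    have h1 := (basisMonomials (ι ⊕ Fin 2) ℂ).constr_basis ℂ
      (fun m => open Classical in if Q (wtA p m) then (monomial m 1 : SPoly ι) else 0) m
    rw [if_neg h, coe_basisMonomials] at h1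
    exact h1
  exact this hq

lemma polyProj_idl (Q : LGroup ι p → Prop) (q : SPoly ι) (hq : q ∈ SIdl ι p c0 c1) :
    polyProj p Q q ∈ SIdl ι p c0 c1 := by
  refine Submodule.span_induction (p := fun q _ => ∀ r : SPoly ι,
    polyProj p Q (r * q) ∈ SIdl ι p c0 c1) ?_ ?_ ?_ ?_ hq 1 |> fun h => by simpa using h
  · rintro _ ⟨i, rfl⟩ r
    induction r using MvPolynomial.induction_on' with
    | monomial m a =>
      have h1 := polyComp_mul (monomial_mem_polyComp (p := p) m a)
        (rel_mem (p := p) (c0 := c0) (c1 := c1) i)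
      by_cases h : Q (wtA p m + cgen p)
      · rw [polyProj_of h h1]
        exact Ideal.mul_mem_left _ _ (Ideal.subset_span ⟨i, rfl⟩)
      · rw [polyProj_not h h1]; exact zero_mem _
    | add a b ha hb => rw [add_mul, map_add]; exact add_mem ha hb
  · intro r; simp
  · intro a b _ _ ha hb r
    rw [mul_add, map_add]; exact add_mem (ha r) (hb r)
  · intro s a _ ha r
    rw [smul_eq_mul, ← mul_assoc]; exact ha _

lemma sProj_exists (Q : LGroup ι p → Prop) : ∃ P : SAlg ι p c0 c1 →ₗ[ℂ] SAlg ι p c0 c1,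
    (∀ z, Q z → ∀ s ∈ SCompA p c0 c1 z, P s = s) ∧
    (∀ z, ¬ Q z → ∀ s ∈ SCompA p c0 c1 z, P s = 0) := by
  let P0 : (SPoly ι ⧸ (SIdl ι p c0 c1).restrictScalars ℂ) →ₗ[ℂ] SAlg ι p c0 c1 :=
    Submodule.liftQ _ ((sMk p c0 c1).toLinearMap ∘ₗ polyProj p Q) (by
      intro q hq
      rw [LinearMap.mem_ker]
      exact (sMk_eq_zero _).2 (polyProj_idl Q q hq))
  let P := P0 ∘ₗ (Submodule.Quotient.restrictScalarsEquiv ℂ (SIdl ι p c0 c1)).symm.toLinearMap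
  have hP : ∀ q, P (sMk p c0 c1 q) = sMk p c0 c1 (polyProj p Q q) := fun q => rfl
  refine ⟨P, ?_, ?_⟩
  · intro z hz s hs
    obtain ⟨q, h, rfl⟩ := mem_SComp.1 hs
    rw [hP, polyProj_of hz h]
  · intro z hz s hs
    obtain ⟨q, h, rfl⟩ := mem_SComp.1 hs
    rw [hP, polyProj_not hz h, map_zero]

lemma sSpan (s : SAlg ι p c0 c1) : s ∈ ⨆ z, SCompA p c0 c1 z := by
  obtain ⟨q, rfl⟩ := sMk_surj s
  induction q using MvPolynomial.induction_on' with
  | monomial m a =>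
    exact Submodule.mem_iSup_of_mem (wtA p m) (mem_SComp.2 ⟨_, monomial_mem_polyComp m a, rfl⟩)
  | add a b ha hb => rw [map_add]; exact add_mem ha hb

end SF

section SG

variable {ι : Type} [Fintype ι] [DecidableEq ι] {p : ι → ℕ} {c0 c1 : ι → ℂ}

/-- Points of `Spec S`. -/
def sPt (v : Fin 2 → ℂ) (r : ι → ℂ) (h : ∀ i, r i ^ p i = c0 i * v 0 + c1 i * v 1) :
    SAlg ι p c0 c1 →ₐ[ℂ] ℂ :=
  Ideal.Quotient.liftₐ _ (aeval (Sum.elim r v)) (by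
    intro q hq
    rw [← RingHom.mem_ker]
    revert q
    change SIdl ι p c0 c1 ≤ _
    rw [SIdl, Ideal.span_le]
    rintro _ ⟨i, rfl⟩
    rw [SetLike.mem_coe, RingHom.mem_ker]
    simp [h i])

lemma sPt_mk (v : Fin 2 → ℂ) (r : ι → ℂ) (h : ∀ i, r i ^ p i = c0 i * v 0 + c1 i * v 1)
    (q : SPoly ι) : sPt v r h (sMk p c0 c1 q) = aeval (Sum.elim r v) q := rfl

lemma sPt_aeval (v : Fin 2 → ℂ) (r : ι → ℂ) (h : ∀ i, r i ^ p i = c0 i * v 0 + c1 i * v 1)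
    (F : MvPolynomial (Fin 2) ℂ) :
    sPt v r h (aeval (fun k => sMk p c0 c1 (X (Sum.inr k))) F) = eval v F := by
  rw [← AlgHom.comp_apply]
  have : (sPt v r h).comp (aeval (fun k => sMk p c0 c1 (X (Sum.inr k)))) = aeval v := by
    apply MvPolynomial.algHom_ext
    intro k
    simp [sPt_mk]
  rw [this]; rfl

/-- The linear forms in two variables. -/
def lin2 (c0 c1 : ι → ℂ) (i : ι) : MvPolynomial (Fin 2) ℂ := C (c0 i) * X 0 + C (c1 i) * X 1

lemma lin2_hom (i : ι) : (lin2 c0 c1 i).IsHomogeneous 1 := by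
  refine IsHomogeneous.add ?_ ?_
  · simpa using (isHomogeneous_C (Fin 2) (c0 i)).mul (isHomogeneous_X ℂ 0)
  · simpa using (isHomogeneous_C (Fin 2) (c1 i)).mul (isHomogeneous_X ℂ 1)

lemma sS1 (hp : ∀ i, 2 ≤ p i) (y : LGroup ι p) : ∃ (b : ι → ℕ) (d : ℕ),
    ∀ s ∈ SCompA p c0 c1 y, ∃ F : MvPolynomial (Fin 2) ℂ, F.IsHomogeneous d ∧
      s = (∏ i, sMk p c0 c1 (X (Sum.inl i)) ^ b i) *
        aeval (fun k => sMk p c0 c1 (X (Sum.inr k))) F := by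
  by_cases hy : ∃ m0, wtA p m0 = y
  · obtain ⟨m0, rfl⟩ := hy
    refine ⟨fun i => m0 (Sum.inl i) % p i,
      (∑ i, m0 (Sum.inl i) / p i) + (m0 (Sum.inr 0) + m0 (Sum.inr 1)), ?_⟩
    intro s hs
    obtain ⟨q, hq, rfl⟩ := mem_SComp.1 hs
    rw [polyComp_eq_span] at hq
    induction hq using Submodule.span_induction with
    | mem q h =>
      obtain ⟨m, hm, rfl⟩ := h
      obtain ⟨h1, h2⟩ := wtA_unique hp _ _ hm
      rw [← h2]
      refine ⟨(∏ i, lin2 c0 c1 i ^ (m (Sum.inl i) / p i)) *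
        (X 0 ^ m (Sum.inr 0) * X 1 ^ m (Sum.inr 1)), ?_, ?_⟩
      · refine IsHomogeneous.mul (IsHomogeneous.prod _ _ _ fun i _ => ?_)
          (IsHomogeneous.mul ?_ ?_)
        · simpa using (lin2_hom i).pow _
        · simpa using (isHomogeneous_X ℂ 0).pow _
        · simpa using (isHomogeneous_X ℂ 1).pow _
      · rw [monomial_eq, Finsupp.prod_fintype _ _ (by simp), Fintype.prod_sum_type,
          Fin.prod_univ_two, C_1, one_mul, map_mul, map_prod, map_mul (aeval _), map_prod, ← mul_assoc,
          ← Finset.prod_mul_distrib]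
        congr 1
        · refine Finset.prod_congr rfl fun i _ => ?_
          dsimp only
          rw [← h1 i, map_pow, map_pow]
          have h3 : aeval (fun k => sMk p c0 c1 (X (Sum.inr k))) (lin2 c0 c1 i) =
              sMk p c0 c1 (X (Sum.inl i)) ^ p i := by
            rw [sX_pow, lin2, lin]
            simp only [map_add, map_mul, aeval_X, algHom_C]
          rw [h3, ← pow_mul, ← pow_add, Nat.mod_add_div]
        · simp only [map_mul, map_pow, aeval_X]
    | zero => exact ⟨0, isHomogeneous_zero _ _ _, by simp⟩
    | add a b ha hb iha ihb =>
      obtain ⟨F, hF, h1⟩ := iha (mem_SComp.2 ⟨a, by rwa [polyComp_eq_span], rfl⟩)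
      obtain ⟨F', hF', h1'⟩ := ihb (mem_SComp.2 ⟨b, by rwa [polyComp_eq_span], rfl⟩)
      exact ⟨F + F', hF.add hF', by rw [map_add, map_add, mul_add, h1, h1']⟩
    | smul k a ha iha =>
      obtain ⟨F, hF, h1⟩ := iha (mem_SComp.2 ⟨a, by rwa [polyComp_eq_span], rfl⟩)
      refine ⟨C k * F, by simpa using (isHomogeneous_C (Fin 2) k).mul hF, ?_⟩
      rw [← smul_eq_C_mul, map_smul, map_smul, h1, mul_smul_comm]
  · refine ⟨0, 0, fun s hs => ⟨0, isHomogeneous_zero _ _ _, ?_⟩⟩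
    obtain ⟨q, hq, rfl⟩ := mem_SComp.1 hs
    have : q = 0 := by
      ext m
      rw [coeff_zero]
      by_contra h
      exact hy ⟨m, hq m h⟩
    simp [this]

lemma sK2 (hp : ∀ i, 2 ≤ p i) (hnz : ∀ i, (c0 i, c1 i) ≠ (0, 0)) (j : ι) (y : LGroup ι p)
    (s : SAlg ι p c0 c1) (hs : s ∈ SCompA p c0 c1 y)
    (h : sMk p c0 c1 (X (Sum.inl j)) * s = 0) : s = 0 := by
  obtain ⟨b, d, hb⟩ := sS1 (c0 := c0) (c1 := c1) hp y
  obtain ⟨F, hF, rfl⟩ := hb s hs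
  suffices F = 0 by simp [this]
  have h1 : F * ∏ i, lin2 c0 c1 i = 0 := by
    apply MvPolynomial.funext
    intro v
    rw [map_zero, map_mul, map_prod]
    by_contra hne
    obtain ⟨hF0, hl0⟩ := mul_ne_zero_iff.1 hne
    rw [Finset.prod_ne_zero_iff] at hl0
    have hroot : ∀ i, ∃ r : ℂ, r ^ p i = c0 i * v 0 + c1 i * v 1 := fun i =>
      IsAlgClosed.exists_pow_nat_eq _ (by have := hp i; omega)
    choose r hr using hroot
    have hr0 : ∀ i, r i ≠ 0 := by
      intro i h0
      apply hl0 i (Finset.mem_univ i)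
      have := hr i
      rw [h0, zero_pow (by have := hp i; omega)] at this
      simp [lin2, ← this]
    have h2 := congrArg (sPt v r hr) h
    rw [map_mul, map_mul, map_prod, sPt_aeval, map_zero] at h2
    simp only [map_pow, sPt_mk, aeval_X, Sum.elim_inl] at h2
    refine mul_ne_zero (hr0 j) (mul_ne_zero ?_ hF0) h2
    exact Finset.prod_ne_zero_iff.2 fun i _ => pow_ne_zero _ (hr0 i)
  rcases mul_eq_zero.1 h1 with h2 | h2
  · exact h2
  · exfalso
    rw [Finset.prod_eq_zero_iff] at h2
    obtain ⟨i, _, hi⟩ := h2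
    apply hnz i
    have e0 := congrArg (eval ![1, 0]) hi
    have e1 := congrArg (eval ![0, 1]) hi
    simp [lin2] at e0 e1
    simp [e0, e1]

lemma hom_scale {A : Type} [CommRing A] [Algebra ℂ A] (v : Fin 2 → ℂ) (T : A) (d : ℕ)
    (F : MvPolynomial (Fin 2) ℂ) (hF : F.IsHomogeneous d) :
    aeval (fun k => algebraMap ℂ A (v k) * T) F = algebraMap ℂ A (eval v F) * T ^ d := by
  rw [aeval_def, eval₂_eq', eval_eq', map_sum, Finset.sum_mul]
  refine Finset.sum_congr rfl fun m hm => ?_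
  have := hF (mem_support_iff.1 hm)
  rw [Finsupp.weight_apply, Finsupp.sum_fintype _ _ (by simp)] at this
  simp only [Pi.one_apply, smul_eq_mul, mul_one] at this
  rw [map_mul, map_prod, mul_assoc, ← this, ← Finset.prod_pow_eq_pow_sum,
    ← Finset.prod_mul_distrib]
  congr 1
  refine Finset.prod_congr rfl fun i _ => ?_
  rw [mul_pow, map_pow]

lemma hom_eq_zero_of_eval {A : Type} [CommRing A] [Algebra ℂ A] (π : SAlg ι p c0 c1 →ₐ[ℂ] A)
    (hp : ∀ i, 2 ≤ p i) (hnz : ∀ i, (c0 i, c1 i) ≠ (0, 0)) (j : ι)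
    (hπ : π (sMk p c0 c1 (X (Sum.inl j))) = 0) (d : ℕ)
    (F : MvPolynomial (Fin 2) ℂ) (hF : F.IsHomogeneous d) (h0 : eval ![c1 j, - c0 j] F = 0) :
    π (aeval (fun k => sMk p c0 c1 (X (Sum.inr k))) F) = 0 := by
  obtain ⟨w0, w1, hw⟩ : ∃ w0 w1 : ℂ, w0 * c1 j - w1 * c0 j = 1 := by
    by_cases h : c1 j = 0
    · have : c0 j ≠ 0 := fun h' => hnz j (by rw [h, h'])
      exact ⟨0, - (c0 j)⁻¹, by field_simp; ring⟩
    · exact ⟨(c1 j)⁻¹, 0, by field_simp; ring⟩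
  let t : Fin 2 → A := fun k => π (sMk p c0 c1 (X (Sum.inr k)))
  have e1 : π (aeval (fun k => sMk p c0 c1 (X (Sum.inr k))) F) = aeval t F := by
    have : π.comp (aeval (fun k => sMk p c0 c1 (X (Sum.inr k)))) = aeval t := by
      apply MvPolynomial.algHom_ext
      intro k
      simp [t]
    rw [← this, AlgHom.comp_apply]
  have hl : algebraMap ℂ A (c0 j) * t 0 + algebraMap ℂ A (c1 j) * t 1 = 0 := by
    have h1 : π (sMk p c0 c1 (lin c0 c1 j)) = 0 := by
      rw [← sX_pow, map_pow, hπ, zero_pow (by have := hp j; omega)]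
    rw [← h1, lin]
    simp only [map_add, map_mul, algHom_C, AlgHom.commutes, t]
  set a := algebraMap ℂ A with ha
  have hw' : a w0 * a (c1 j) - a w1 * a (c0 j) = 1 := by
    rw [← map_mul, ← map_mul, ← map_sub, hw, map_one]
  have e2 : t = fun k => a ((![c1 j, - c0 j] : Fin 2 → ℂ) k) * (a w0 * t 0 + a w1 * t 1) := by
    funext k
    fin_cases k
    · simp only [Fin.zero_eta, Matrix.cons_val_zero]
      linear_combination (- t 0) * hw' - a w1 * hl
    · simp only [Fin.mk_one, Matrix.cons_val_one, Matrix.cons_val_fin_one, map_neg]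
      linear_combination (- t 1) * hw' + a w0 * hl
  rw [e1, e2, hom_scale _ _ d F hF, h0, map_zero, zero_mul]

lemma dvd_of_eval (hp : ∀ i, 2 ≤ p i) (hnz : ∀ i, (c0 i, c1 i) ≠ (0, 0)) (j : ι) (d : ℕ)
    (F : MvPolynomial (Fin 2) ℂ) (hF : F.IsHomogeneous d) (h0 : eval ![c1 j, - c0 j] F = 0) :
    sMk p c0 c1 (X (Sum.inl j)) ∣ aeval (fun k => sMk p c0 c1 (X (Sum.inr k))) F := by
  rw [← Ideal.mem_span_singleton]
  have key : ∀ I : Ideal (SAlg ι p c0 c1), sMk p c0 c1 (X (Sum.inl j)) ∈ I →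
      aeval (fun k => sMk p c0 c1 (X (Sum.inr k))) F ∈ I := by
    intro I hI
    have h1 : Ideal.Quotient.mkₐ ℂ I (sMk p c0 c1 (X (Sum.inl j))) = 0 :=
      Ideal.Quotient.eq_zero_iff_mem.2 hI
    have h2 := hom_eq_zero_of_eval (A := SAlg ι p c0 c1 ⧸ I) (Ideal.Quotient.mkₐ ℂ I) hp hnz j h1 d F hF h0
    exact Ideal.Quotient.eq_zero_iff_mem.1 h2
  exact key _ (Ideal.mem_span_singleton_self _)

lemma sRoots (hp : ∀ i, 2 ≤ p i) (hdist : ∀ i j : ι, i ≠ j → c0 i * c1 j ≠ c1 i * c0 j) (j : ι) :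
    ∃ r : ι → ℂ, r j = 0 ∧ (∀ i, i ≠ j → r i ≠ 0) ∧
      ∀ i, r i ^ p i = c0 i * (![c1 j, - c0 j] : Fin 2 → ℂ) 0 +
        c1 i * (![c1 j, - c0 j] : Fin 2 → ℂ) 1 := by
  have hroot : ∀ i, ∃ r : ℂ, r ^ p i = c0 i * (![c1 j, - c0 j] : Fin 2 → ℂ) 0 +
        c1 i * (![c1 j, - c0 j] : Fin 2 → ℂ) 1 := fun i =>
    IsAlgClosed.exists_pow_nat_eq _ (by have := hp i; omega)
  choose r hr using hroot
  refine ⟨r, ?_, ?_, hr⟩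
  · have := hr j
    simp only [Matrix.cons_val_zero, Matrix.cons_val_one, Matrix.cons_val_fin_one] at this
    exact eq_zero_of_pow_eq_zero (this.trans (by ring))
  · intro i hi h0
    have := hr i
    rw [h0, zero_pow (by have := hp i; omega)] at this
    simp only [Matrix.cons_val_zero, Matrix.cons_val_one, Matrix.cons_val_fin_one] at this
    exact hdist i j hi (by linear_combination -this)

/-- The abstract properties of the graded ring used in the proof. -/
structure GD {L : Type} [AddCommGroup L] {S : Type} [CommRing S] [Algebra ℂ S]
    (G : L → Submodule ℂ S) (X : S) (e : L) (ε : S →ₐ[ℂ] ℂ) (H Lp : AddSubmonoid L) : Prop where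
  mul : ∀ {y z q r}, q ∈ G y → r ∈ G z → q * r ∈ G (y + z)
  one : 1 ∈ G 0
  span : ∀ s, s ∈ ⨆ z, G z
  proj : ∀ Q : L → Prop, ∃ P : S →ₗ[ℂ] S, (∀ z, Q z → ∀ s ∈ G z, P s = s) ∧
    (∀ z, ¬ Q z → ∀ s ∈ G z, P s = 0)
  hX : X ∈ G e
  eX : ε X = 0
  k2 : ∀ y s, s ∈ G y → X * s = 0 → s = 0
  k1 : ∀ y s, s ∈ G y → ε s = 0 → X ∣ s
  f5 : ∀ y s, s ∈ G y → ε s ≠ 0 → y ∈ H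
  f6 : ∀ y, y ∈ H → ∃ s ∈ G y, ε s ≠ 0
  f7 : ∀ y s, s ∈ G y → s ≠ 0 → y ∈ Lp

theorem exists_GD (hp : ∀ i, 2 ≤ p i) (hnz : ∀ i, (c0 i, c1 i) ≠ (0, 0))
    (hdist : ∀ i j : ι, i ≠ j → c0 i * c1 j ≠ c1 i * c0 j) (j : ι) :
    ∃ ε : SAlg ι p c0 c1 →ₐ[ℂ] ℂ, GD (SCompA p c0 c1) (sMk p c0 c1 (X (Sum.inl j)))
      (egen p j) ε (Hj p j) (Lplus p) := by
  obtain ⟨r, hrj, hri, hr⟩ := sRoots hp hdist j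
  set v : Fin 2 → ℂ := ![c1 j, - c0 j] with hv
  refine ⟨sPt v r hr, ⟨SComp_mul, SComp_one, sSpan, sProj_exists, sX_mem (Sum.inl j), ?_,
    sK2 hp hnz j, ?_, ?_, ?_, ?_⟩⟩
  · simp [sPt_mk, hrj]
  · intro y s hs h0
    obtain ⟨b, d, hb⟩ := sS1 (c0 := c0) (c1 := c1) hp y
    obtain ⟨F, hF, rfl⟩ := hb s hs
    by_cases hbj : b j = 0
    · refine Dvd.dvd.mul_left (dvd_of_eval hp hnz j d F hF ?_) _
      rw [map_mul, sPt_aeval, map_prod] at h0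
      refine (mul_eq_zero.1 h0).resolve_left (Finset.prod_ne_zero_iff.2 fun i _ => ?_)
      rw [map_pow, sPt_mk, aeval_X, Sum.elim_inl]
      by_cases hi : i = j
      · subst hi; simp [hbj]
      · exact pow_ne_zero _ (hri i hi)
    · refine Dvd.dvd.mul_right ?_ _
      exact (dvd_pow_self _ hbj).trans (Finset.dvd_prod_of_mem _ (Finset.mem_univ j))
  · intro y s hs h0
    obtain ⟨q, hq, rfl⟩ := mem_SComp.1 hs
    rw [sPt_mk, aeval_def, eval₂_eq'] at h0
    obtain ⟨m, hm, hm0⟩ := Finset.exists_ne_zero_of_sum_ne_zero h0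
    rw [← hq m (mem_support_iff.1 hm)]
    have h1 := (mul_ne_zero_iff.1 hm0).2
    rw [Finset.prod_ne_zero_iff] at h1
    have h2 := h1 (Sum.inl j) (Finset.mem_univ _)
    rw [Sum.elim_inl, hrj] at h2
    have h3 : m (Sum.inl j) = 0 := by
      by_contra h; exact h2 (zero_pow h)
    refine add_mem (sum_mem fun i _ => ?_) (nsmul_mem (cgen_memH j) _)
    by_cases hi : i = j
    · subst hi; rw [h3, zero_smul]; exact zero_mem _
    · exact nsmul_mem (egen_memH i j hi) _
  · intro y hy
    induction hy using AddSubmonoid.closure_induction with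
    | mem z h =>
      rcases h with rfl | ⟨i, hi, rfl⟩
      · by_cases h : c1 j = 0
        · refine ⟨sMk p c0 c1 (X (Sum.inr 1)), sX_mem (Sum.inr 1), ?_⟩
          have : c0 j ≠ 0 := fun h' => hnz j (by rw [h, h'])
          simpa [sPt_mk, hv] using this
        · refine ⟨sMk p c0 c1 (X (Sum.inr 0)), sX_mem (Sum.inr 0), ?_⟩
          simpa [sPt_mk, hv] using h
      · exact ⟨_, sX_mem (Sum.inl i), by simpa [sPt_mk] using hri i hi⟩
    | zero => exact ⟨1, SComp_one, by simp⟩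
    | add a b _ _ ha hb =>
      obtain ⟨s, hs, h⟩ := ha
      obtain ⟨s', hs', h'⟩ := hb
      exact ⟨s * s', SComp_mul hs hs', by rw [map_mul]; exact mul_ne_zero h h'⟩
  · intro y s hs h0
    obtain ⟨q, hq, rfl⟩ := mem_SComp.1 hs
    have : q ≠ 0 := fun h => h0 (by rw [h, map_zero])
    obtain ⟨m, hm⟩ := MvPolynomial.ne_zero_iff.1 this
    rw [← hq m hm]
    exact wtA_mem j m

end SG

namespace GD

variable {L : Type} [AddCommGroup L] {S : Type} [CommRing S] [Algebra ℂ S]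
  {G : L → Submodule ℂ S} {X : S} {e : L} {ε : S →ₐ[ℂ] ℂ} {H Lp : AddSubmonoid L}

/-- Projection to the degrees satisfying `Q`. -/
def P (D : GD G X e ε H Lp) (Q : L → Prop) : S →ₗ[ℂ] S := (D.proj Q).choose

lemma P_of (D : GD G X e ε H Lp) {Q : L → Prop} {z : L} (h : Q z) {s : S} (hs : s ∈ G z) :
    D.P Q s = s := (D.proj Q).choose_spec.1 z h s hs

lemma P_not (D : GD G X e ε H Lp) {Q : L → Prop} {z : L} (h : ¬ Q z) {s : S} (hs : s ∈ G z) :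
    D.P Q s = 0 := (D.proj Q).choose_spec.2 z h s hs

lemma ind (D : GD G X e ε H Lp) {motive : S → Prop} (hom : ∀ z, ∀ s ∈ G z, motive s)
    (add : ∀ s t, motive s → motive t → motive (s + t)) (s : S) : motive s := by
  refine Submodule.iSup_induction G (motive := motive) (D.span s) hom ?_ add
  exact hom 0 0 (zero_mem _)

lemma P_mem (D : GD G X e ε H Lp) {Q : L → Prop} (T : Submodule ℂ S)
    (hT : ∀ z, Q z → G z ≤ T) (s : S) : D.P Q s ∈ T := by
  refine D.ind (motive := fun s => D.P Q s ∈ T) ?_ ?_ s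
  · intro z s hs
    by_cases h : Q z
    · rw [D.P_of h hs]; exact hT z h hs
    · rw [D.P_not h hs]; exact zero_mem _
  · intro s t hs ht
    rw [map_add]; exact add_mem hs ht

lemma P_mul (D : GD G X e ε H Lp) {Q Q' : L → Prop} {d : L} (h : ∀ z, Q' (z + d) ↔ Q z)
    {a : S} (ha : a ∈ G d) (s : S) : D.P Q' (a * s) = a * D.P Q s := by
  refine D.ind (motive := fun s => D.P Q' (a * s) = a * D.P Q s) ?_ ?_ s
  · intro z s hs
    have h1 := D.mul ha hs
    rw [add_comm] at h1
    by_cases hz : Q z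
    · rw [D.P_of hz hs, D.P_of ((h z).2 hz) h1]
    · rw [D.P_not hz hs, D.P_not (fun h' => hz ((h z).1 h')) h1, mul_zero]
  · intro s t hs ht
    rw [mul_add, map_add, map_add, mul_add, hs, ht]

/-- Homogeneous component. -/
def c (D : GD G X e ε H Lp) (w : L) : S →ₗ[ℂ] S := D.P (fun z => z = w)

lemma c_self (D : GD G X e ε H Lp) {w : L} {s : S} (hs : s ∈ G w) : D.c w s = s :=
  D.P_of (Q := fun z => z = w) rfl hs

lemma c_ne (D : GD G X e ε H Lp) {w z : L} (h : z ≠ w) {s : S} (hs : s ∈ G z) : D.c w s = 0 :=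
  D.P_not (Q := fun z => z = w) h hs

lemma c_mem (D : GD G X e ε H Lp) (w : L) (s : S) : D.c w s ∈ G w :=
  D.P_mem (G w) (by rintro z rfl; exact le_rfl) s

lemma c_mul (D : GD G X e ε H Lp) {w d w' : L} (h : w' = w + d) {a : S} (ha : a ∈ G d) (s : S) :
    D.c w' (a * s) = a * D.c w s := by
  subst h
  exact D.P_mul (fun z => by simp) ha s

lemma of_comps (D : GD G X e ε H Lp) (T : Submodule ℂ S) (t : S) (h : ∀ w, D.c w t ∈ T) :
    t ∈ T := by
  obtain ⟨f, hf, rfl⟩ := (Submodule.mem_iSup_iff_exists_finsupp G t).1 (D.span t)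
  have h1 : ∀ w, D.c w (f.sum fun _ xi => xi) = f w := by
    intro w
    rw [Finsupp.sum, map_sum]
    by_cases hw : w ∈ f.support
    · rw [Finset.sum_eq_single_of_mem w hw]
      · exact D.c_self (hf w)
      · intro z _ hz
        exact D.c_ne hz (hf z)
    · rw [Finsupp.notMem_support_iff.1 hw]
      refine Finset.sum_eq_zero fun z hz => D.c_ne ?_ (hf z)
      rintro rfl; exact hw hz
  refine sum_mem fun w _ => ?_
  have := h w
  rwa [h1] at this

lemma pow_mem (D : GD G X e ε H Lp) (n : ℕ) : X ^ n ∈ G (n • e) := by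
  induction n with
  | zero => simpa using D.one
  | succ n ih => rw [pow_succ, succ_nsmul]; exact D.mul ih D.hX

lemma nzd (D : GD G X e ε H Lp) {s : S} (h : X * s = 0) : s = 0 := by
  have := D.of_comps ⊥ s (fun w => by
    rw [Submodule.mem_bot]
    refine D.k2 w _ (D.c_mem w s) ?_
    rw [← D.c_mul (w' := w + e) rfl D.hX, h, map_zero])
  simpa using this

lemma nzd_pow (D : GD G X e ε H Lp) (n : ℕ) {s : S} (h : X ^ n * s = 0) : s = 0 := by
  induction n with
  | zero => simpa using h
  | succ n ih =>
    rw [pow_succ, mul_assoc] at h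
    apply ih
    by_contra h'
    apply h'
    have h2 : X * (X ^ n * s) = 0 := by rw [← h]; ring
    exact D.nzd h2

lemma cancel_pow (D : GD G X e ε H Lp) (n : ℕ) {s t : S} (h : X ^ n * s = X ^ n * t) : s = t := by
  rw [← sub_eq_zero]
  apply D.nzd_pow n
  rw [mul_sub, h, sub_self]

lemma k1h (D : GD G X e ε H Lp) {w : L} {s : S} (hs : s ∈ G w) (h : ε s = 0) :
    ∃ s' ∈ G (w - e), s = X * s' := by
  obtain ⟨t, rfl⟩ := D.k1 w s hs h
  refine ⟨D.c (w - e) t, D.c_mem _ _, ?_⟩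
  rw [← D.c_mul (w' := w) (by abel) D.hX, D.c_self hs]

lemma strip (D : GD G X e ε H Lp) {w : L} {β g γ : S} (i : ℕ) (hβ : β ∈ G w) (hg : ε g ≠ 0)
    (h : g * β = X ^ i * γ) : ∃ β' ∈ G (w - i • e), β = X ^ i * β' := by
  induction i generalizing γ with
  | zero => exact ⟨β, by simpa using hβ, by simp⟩
  | succ i ih =>
    obtain ⟨β', hβ', rfl⟩ := ih (γ := X * γ) (by rw [h]; ring)
    have h1 : g * β' = X * γ := by
      apply D.cancel_pow i
      linear_combination h
    have h2 : ε β' = 0 := by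
      have := congrArg ε h1
      rw [map_mul, map_mul, D.eX, zero_mul] at this
      exact (mul_eq_zero.1 this).resolve_left hg
    obtain ⟨β'', hb, rfl⟩ := D.k1h hβ' h2
    refine ⟨β'', ?_, by ring⟩
    rwa [succ_nsmul, ← sub_sub]

lemma reg (D : GD G X e ε H Lp) {d : L} {g s t : S} (n : ℕ) (hgd : g ∈ G d) (hg : ε g ≠ 0)
    (h : X ^ n * s = g * t) : ∃ w, t = X ^ n * w := by
  have := D.of_comps (LinearMap.range (LinearMap.mulLeft ℂ (X ^ n))) t (fun w => by
    obtain ⟨β', _, hb⟩ := D.strip (w := w) (β := D.c w t) (g := g)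
      (γ := D.c (w + d - n • e) s) n (D.c_mem _ _) hg (by
        rw [← D.c_mul (w' := w + d) rfl hgd, ← h,
          D.c_mul (w := w + d - n • e) (by abel) (D.pow_mem n)])
    exact ⟨β', hb.symm⟩)
  obtain ⟨w, hw⟩ := this
  exact ⟨w, hw.symm⟩

/-- Elements of the coset `y + ℤ x`. -/
def T (G : L → Submodule ℂ S) (y x : L) : Submodule ℂ S := ⨆ k : ℤ, G (y + k • x)

lemma mem_T {y x : L} (k : ℤ) {s : S} (h : s ∈ G (y + k • x)) : s ∈ T G y x :=
  Submodule.mem_iSup_of_mem k h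

lemma T_ind {y x : L} {motive : S → Prop} (hom : ∀ k : ℤ, ∀ s ∈ G (y + k • x), motive s)
    (add : ∀ s t, motive s → motive t → motive (s + t)) (s : S) (hs : s ∈ T G y x) :
    motive s := by
  refine Submodule.iSup_induction _ (motive := motive) hs hom ?_ add
  exact hom 0 0 (zero_mem _)

lemma T_mul (D : GD G X e ε H Lp) {y y' x : L} {s t : S} (hs : s ∈ T G y x) (ht : t ∈ T G y' x) :
    s * t ∈ T G (y + y') x := by
  refine T_ind (motive := fun s => s * t ∈ T G (y + y') x) ?_ ?_ s hs
  · intro k s hs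
    refine T_ind (motive := fun t => s * t ∈ T G (y + y') x) ?_ ?_ t ht
    · intro k' t ht
      refine mem_T (k + k') ?_
      have := D.mul hs ht
      rwa [show y + k • x + (y' + k' • x) = y + y' + (k + k') • x by rw [add_smul]; abel] at this
    · intro a b ha hb; rw [mul_add]; exact add_mem ha hb
  · intro a b ha hb; rw [add_mul]; exact add_mem ha hb

/-- Projection to `T`. -/
def PT (D : GD G X e ε H Lp) (y x : L) : S →ₗ[ℂ] S := D.P (fun z => ∃ k : ℤ, z = y + k • x)

lemma PT_mem (D : GD G X e ε H Lp) (y x : L) (s : S) : D.PT y x s ∈ T G y x :=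
  D.P_mem _ (by rintro z ⟨k, rfl⟩ s hs; exact mem_T k hs) s

lemma PT_self (D : GD G X e ε H Lp) (y x : L) (s : S) (hs : s ∈ T G y x) : D.PT y x s = s := by
  refine T_ind (motive := fun s => D.PT y x s = s) ?_ ?_ s hs
  · intro k s hs
    exact D.P_of (Q := fun z => ∃ k : ℤ, z = y + k • x) ⟨k, rfl⟩ hs
  · intro a b ha hb; rw [map_add, ha, hb]

lemma PT_mul (D : GD G X e ε H Lp) (y x : L) (k : ℤ) {f : S} (hf : f ∈ G (k • x)) (s : S) :
    D.PT y x (f * s) = f * D.PT y x s := by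
  refine D.P_mul ?_ hf s
  intro z
  constructor
  · rintro ⟨l, hl⟩
    exact ⟨l - k, by rw [sub_smul]; rw [← eq_sub_iff_add_eq] at hl; rw [hl]; abel⟩
  · rintro ⟨l, rfl⟩
    exact ⟨l + k, by rw [add_smul]; abel⟩

lemma T_sat (D : GD G X e ε H Lp) (y x : L) (k : ℤ) {f : S} (hf : f ∈ G (k • x))
    (hnz : ∀ s, f * s = 0 → s = 0) (s : S) (h : f * s ∈ T G y x) : s ∈ T G y x := by
  have h1 := D.PT_self y x _ h
  rw [D.PT_mul y x k hf] at h1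
  have h2 : D.PT y x s = s := by
    rw [← sub_eq_zero]; apply hnz; rw [mul_sub, h1, sub_self]
  rw [← h2]; exact D.PT_mem y x s

lemma T_idl (D : GD G X e ε H Lp) (y x : L) (k : ℤ) {f g : S} (hf : f ∈ G (k • x))
    (hg : g ∈ G (k • x)) (s : S) (h : s ∈ T G y x) (hs : ∃ A B, s = f * A + g * B) :
    ∃ A ∈ T G y x, ∃ B ∈ T G y x, s = f * A + g * B := by
  obtain ⟨A, B, rfl⟩ := hs
  refine ⟨_, D.PT_mem y x A, _, D.PT_mem y x B, ?_⟩
  rw [← D.PT_mul y x k hf, ← D.PT_mul y x k hg, ← map_add, D.PT_self y x _ h]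

/-- Homogeneous version of ideal membership. -/
lemma idl_hom (D : GD G X e ε H Lp) {w d : L} {f g s : S} (hf : f ∈ G d) (hg : g ∈ G d)
    (hs : s ∈ G w) (h : ∃ A B, s = f * A + g * B) :
    ∃ A ∈ G (w - d), ∃ B ∈ G (w - d), s = f * A + g * B := by
  obtain ⟨A, B, h⟩ := h
  refine ⟨_, D.c_mem _ A, _, D.c_mem _ B, ?_⟩
  rw [← D.c_mul (w' := w) (by abel) hf, ← D.c_mul (w' := w) (by abel) hg, ← map_add, ← h,
    D.c_self hs]

end GD
section ExtSec
open CategoryTheory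



lemma ext1_iff {R : Type} [CommRing R] (M N : ModuleCat.{0} R) (P : ProjectiveResolution M) :
    Subsingleton (((Ext R (ModuleCat R) 1).obj (Opposite.op M)).obj N) ↔
      ∀ g : P.complex.X 1 ⟶ N, P.complex.d 2 1 ≫ g = 0 →
        ∃ h : P.complex.X 0 ⟶ N, P.complex.d 1 0 ≫ h = g := by
  rw [← ModuleCat.isZero_iff_subsingleton, (P.isoExt 1 N).isZero_iff,
    ← HomologicalComplex.exactAt_iff_isZero_homology,
    HomologicalComplex.exactAt_iff' _ 0 1 2 (by simp) (by simp),
    ShortComplex.moduleCat_exact_iff]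
  rfl

/-- Every extension of `M` by `N` splits. -/
def ExtSplits (R : Type) [CommRing R] (M N : Type) [AddCommGroup M] [Module R M]
    [AddCommGroup N] [Module R N] : Prop :=
  ∀ (E : Type) [AddCommGroup E] [Module R E] (i : N →ₗ[R] E) (π : E →ₗ[R] M),
    Function.Injective i → Function.Surjective π → LinearMap.range i = LinearMap.ker π →
    ∃ σ : M →ₗ[R] E, ∀ m, π (σ m) = m

lemma ext1_iff_splits {R : Type} [CommRing R] (M N : Type) [AddCommGroup M] [Module R M]
    [AddCommGroup N] [Module R N] :
    Subsingleton (((Ext R (ModuleCat R) 1).obj (Opposite.op (ModuleCat.of R M))).obj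
      (ModuleCat.of R N)) ↔ ExtSplits R M N := by
  obtain ⟨P⟩ : Nonempty (ProjectiveResolution (ModuleCat.of R M)) := ⟨ProjectiveResolution.of _⟩
  rw [ext1_iff _ _ P]
  have hex1 := (ShortComplex.moduleCat_exact_iff _).1 (P.exact_succ 0)
  have hex0 := (ShortComplex.moduleCat_exact_iff _).1 P.exact₀
  have hsurj : Function.Surjective (P.π.f 0) := (ModuleCat.epi_iff_surjective _).1 inferInstance
  have hd0 : ∀ x, P.π.f 0 (P.complex.d 1 0 x) = 0 := fun x => by
    exact congrArg (fun f => f.hom x) P.complex_d_comp_π_f_zero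
  have hd1 : ∀ x, P.complex.d 1 0 (P.complex.d 2 1 x) = 0 := fun x => by
    exact congrArg (fun f => f.hom x) (P.complex.d_comp_d 2 1 0)
  let p0 : P.complex.X 0 →ₗ[R] M := (P.π.f 0).hom
  constructor
  · intro H E _ _ i π hi hπ hex
    obtain ⟨l, hl⟩ : ∃ l : P.complex.X 0 ⟶ ModuleCat.of R E, l ≫ ModuleCat.ofHom π = ModuleCat.ofHom p0 := by
      have : Epi (ModuleCat.ofHom π) := (ModuleCat.epi_iff_surjective _).2 hπ
      exact ⟨Projective.factorThru _ _, Projective.factorThru_comp _ _⟩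
    have hl' : ∀ x, π (l x) = p0 x := fun x => congrArg (fun f => f.hom x) hl
    let iE := LinearEquiv.ofInjective i hi
    have hk : ∀ x, l (P.complex.d 1 0 x) ∈ LinearMap.range i := by
      intro x
      rw [hex, LinearMap.mem_ker, hl']
      exact hd0 x
    let g : P.complex.X 1 →ₗ[R] N := iE.symm.toLinearMap ∘ₗ
      ((l.hom ∘ₗ (P.complex.d 1 0).hom).codRestrict (LinearMap.range i) hk)
    have hg : ∀ x, i (g x) = l (P.complex.d 1 0 x) := by
      intro x
      have : iE (g x) = _ := LinearEquiv.apply_symm_apply iE _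
      exact congrArg Subtype.val this
    obtain ⟨h, hh⟩ := H (ModuleCat.ofHom g) (by
      ext x
      apply hi
      refine (hg _).trans ((congrArg l (hd1 x)).trans ?_)
      exact (map_zero l.hom).trans (map_zero i).symm)
    have hh' : ∀ x, h (P.complex.d 1 0 x) = g x := fun x => congrArg (fun f => f.hom x) hh
    let k : P.complex.X 0 →ₗ[R] E := l.hom - i ∘ₗ h.hom
    have hik : ∀ z, π (i z) = 0 := fun z => by
      have : i z ∈ LinearMap.ker π := hex ▸ LinearMap.mem_range_self i z
      exact this
    have hkk : LinearMap.ker p0 ≤ LinearMap.ker k := by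
      intro x hx
      obtain ⟨y, rfl⟩ := hex0 x hx
      change l _ - i (h _) = 0
      erw [hh', hg]
      exact sub_self _
    let q := LinearMap.quotKerEquivOfSurjective p0 hsurj
    refine ⟨(LinearMap.ker p0).liftQ k hkk ∘ₗ q.symm.toLinearMap, fun m => ?_⟩
    obtain ⟨x, rfl⟩ := hsurj m
    have : q.symm (p0 x) = Submodule.Quotient.mk x := by
      rw [LinearEquiv.symm_apply_eq]; rfl
    change π ((LinearMap.ker p0).liftQ k hkk (q.symm (p0 x))) = p0 x
    rw [this, Submodule.liftQ_apply]
    change π (l x - i (h x)) = _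
    rw [map_sub, hik, hl', sub_zero]
  · intro H g hg
    have hg0 : ∀ x, g (P.complex.d 2 1 x) = 0 := fun x => congrArg (fun f => f.hom x) hg
    let W : Submodule R (N × P.complex.X 0) :=
      LinearMap.range (g.hom.prod (P.complex.d 1 0).hom)
    let E := (N × P.complex.X 0) ⧸ W
    let i : N →ₗ[R] E := W.mkQ ∘ₗ LinearMap.inl R N _
    let π : E →ₗ[R] M := W.liftQ (p0 ∘ₗ LinearMap.snd R N _) (by
      rintro _ ⟨x, rfl⟩
      exact hd0 x)
    have hi : Function.Injective i := by
      rw [← LinearMap.ker_eq_bot, LinearMap.ker_eq_bot']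
      intro m hm
      obtain ⟨x, hx⟩ := (Submodule.Quotient.mk_eq_zero W).1 hm
      have h1 : g x = m := congrArg Prod.fst hx
      have h2 : P.complex.d 1 0 x = 0 := congrArg Prod.snd hx
      obtain ⟨y, rfl⟩ := hex1 x h2
      rw [← h1]; exact hg0 y
    have hπ : Function.Surjective π := by
      intro m
      obtain ⟨x, hx⟩ := hsurj m
      exact ⟨W.mkQ (0, x), hx⟩
    have hE : LinearMap.range i = LinearMap.ker π := by
      apply le_antisymm
      · rintro _ ⟨m, rfl⟩
        change p0 0 = 0
        simp
      · intro e he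
        obtain ⟨⟨m, x⟩, rfl⟩ := W.mkQ_surjective e
        obtain ⟨y, rfl⟩ := hex0 x he
        refine ⟨m - g y, ?_⟩
        refine (Submodule.Quotient.eq W).2 ⟨-y, ?_⟩
        ext <;> simp
    obtain ⟨σ, hσ⟩ := H E i π hi hπ hE
    -- the retraction
    let iE := LinearEquiv.ofInjective i hi
    let r0 : E →ₗ[R] E := LinearMap.id - σ ∘ₗ π
    have hr0 : ∀ e, r0 e ∈ LinearMap.range i := by
      intro e
      rw [hE]
      change π (e - σ (π e)) = 0
      rw [map_sub, hσ, sub_self]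
    let r : E →ₗ[R] N := iE.symm.toLinearMap ∘ₗ r0.codRestrict _ hr0
    have hr : ∀ e, i (r e) = e - σ (π e) := by
      intro e
      have : iE (r e) = _ := LinearEquiv.apply_symm_apply iE _
      exact congrArg Subtype.val this
    refine ⟨ModuleCat.ofHom (-(r ∘ₗ W.mkQ ∘ₗ LinearMap.inr R N _)), ?_⟩
    ext x
    apply hi
    change i (-(r (W.mkQ (0, P.complex.d 1 0 x)))) = i (g x)
    rw [map_neg, hr]
    have h1 : π (W.mkQ (0, P.complex.d 1 0 x)) = 0 := hd0 x
    rw [h1, map_zero, sub_zero, ← map_neg]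
    refine (Submodule.Quotient.eq W).2 ⟨-x, ?_⟩
    ext <;> simp

end ExtSec

/-- Abstract data: `R ⊆ S`, an `R`-submodule `M` of `S`, its dual, and a regular sequence. -/
structure KData (S : Type) [CommRing S] [Algebra ℂ S] (R : Subalgebra ℂ S) (M : Submodule R S)
    (M' : Set S) (f g a1 b1 a2 b2 : S) : Prop where
  ha1 : a1 ∈ M
  ha2 : a2 ∈ M
  hb1 : b1 ∈ M'
  hb2 : b2 ∈ M'
  hf : f = a1 * b1
  hg : g = a2 * b2
  hMM : ∀ m ∈ M, ∀ b ∈ M', b * m ∈ R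
  hRM : ∀ r ∈ R, ∀ b ∈ M', r * b ∈ M'
  hnzd : ∀ s, f * s = 0 → s = 0
  hreg : ∀ s t, f * s = g * t → ∃ w, t = f * w
  satR : ∀ s, f * s ∈ R → s ∈ R
  satM' : ∀ s, f * s ∈ M' → s ∈ M'
  idlR : ∀ s ∈ R, (∃ A B, s = f * A + g * B) → ∃ A ∈ R, ∃ B ∈ R, s = f * A + g * B
  idlM' : ∀ s ∈ M', (∃ A B, s = f * A + g * B) → ∃ A ∈ M', ∃ B ∈ M', s = f * A + g * B

namespace KData

variable {S : Type} [CommRing S] [Algebra ℂ S] {R : Subalgebra ℂ S} {M : Submodule R S}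
  {M' : Set S} {f g a1 b1 a2 b2 : S}

lemma fR (D : KData S R M M' f g a1 b1 a2 b2) : f ∈ R := by
  rw [D.hf, mul_comm]; exact D.hMM _ D.ha1 _ D.hb1

lemma gR (D : KData S R M M' f g a1 b1 a2 b2) : g ∈ R := by
  rw [D.hg, mul_comm]; exact D.hMM _ D.ha2 _ D.hb2

lemma cancel (D : KData S R M M' f g a1 b1 a2 b2) (s : S) (h : ∀ m ∈ M, s * m = 0) : s = 0 := by
  apply D.hnzd
  rw [D.hf]
  calc a1 * b1 * s = b1 * (s * a1) := by ring
    _ = 0 := by rw [h _ D.ha1, mul_zero]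

lemma hom_eq (D : KData S R M M' f g a1 b1 a2 b2) (θ : M →ₗ[R] R) :
    ∃ h ∈ M', ∀ m : M, ((θ m : R) : S) = h * m := by
  have key : ∀ (a b : S) (ha : a ∈ M) (hb : b ∈ M') (m : M),
      ((θ ⟨a, ha⟩ : R) : S) * b * m = a * b * (θ m : R) := by
    intro a b ha hb m
    let r1 : R := ⟨b * m, D.hMM _ m.2 _ hb⟩
    let r2 : R := ⟨b * a, D.hMM _ ha _ hb⟩
    have e1 : r1 • (⟨a, ha⟩ : M) = r2 • m := by
      apply Subtype.ext
      change (b * m) * a = (b * a) * (m : S)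
      ring
    have e2 : r1 * θ ⟨a, ha⟩ = r2 * θ m := by
      have := congrArg θ e1
      rwa [map_smul, map_smul, smul_eq_mul, smul_eq_mul] at this
    have e3 : (b * m) * ((θ ⟨a, ha⟩ : R) : S) = (b * a) * (θ m : R) := congrArg Subtype.val e2
    linear_combination e3
  set hf := ((θ ⟨a1, D.ha1⟩ : R) : S) * b1 with hfdef
  set hg := ((θ ⟨a2, D.ha2⟩ : R) : S) * b2 with hgdef
  have kf : ∀ m : M, hf * m = f * (θ m : R) := fun m => by
    rw [D.hf]; exact key a1 b1 D.ha1 D.hb1 m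
  have kg : ∀ m : M, hg * m = g * (θ m : R) := fun m => by
    rw [D.hg]; exact key a2 b2 D.ha2 D.hb2 m
  have e : f * hg - g * hf = 0 := by
    apply D.cancel
    intro m hm
    have h1 := kf ⟨m, hm⟩
    have h2 := kg ⟨m, hm⟩
    simp only at h1 h2
    linear_combination f * h2 - g * h1
  obtain ⟨h, hh⟩ := D.hreg hg hf (sub_eq_zero.1 e)
  refine ⟨h, D.satM' _ ?_, fun m => ?_⟩
  · rw [← hh]; exact D.hRM _ (θ _).2 _ D.hb1
  · have : f * ((θ m : R) - h * m) = 0 := by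
      have := kf m
      rw [hh] at this
      linear_combination -this
    exact sub_eq_zero.1 (D.hnzd _ this)

/-- Multiplication by an element of the dual. -/
def mulBy (D : KData S R M M' f g a1 b1 a2 b2) (b : S) (hb : b ∈ M') : M →ₗ[R] R where
  toFun m := ⟨b * m, D.hMM _ m.2 _ hb⟩
  map_add' x y := by
    apply Subtype.ext
    change b * ((x : S) + y) = b * x + b * y
    ring
  map_smul' r x := by
    apply Subtype.ext
    change b * ((r : S) * x) = r * (b * x)
    ring

theorem splits_of (D : KData S R M M' f g a1 b1 a2 b2)
    (H : ∀ h ∈ M', (∀ m ∈ M, ∃ A B, h * m = f * A + g * B) → ∃ A B, h = f * A + g * B) :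
    ExtSplits R M R := by
  intro E _ _ i π hi hπ hex
  let F : R := ⟨f, D.fR⟩
  let G : R := ⟨g, D.gR⟩
  have hki : ∀ e, π e = 0 → ∃ r, i r = e := fun e he => by
    have : e ∈ LinearMap.range i := hex ▸ he
    exact this
  have hik : ∀ r, π (i r) = 0 := fun z => by
    have : i z ∈ LinearMap.ker π := hex ▸ LinearMap.mem_range_self i z
    exact this
  obtain ⟨e1, he1⟩ := hπ ⟨a1, D.ha1⟩
  obtain ⟨e2, he2⟩ := hπ ⟨a2, D.ha2⟩
  let φf : M →ₗ[R] E := (LinearMap.toSpanSingleton R E e1) ∘ₗ D.mulBy b1 D.hb1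
  let φg : M →ₗ[R] E := (LinearMap.toSpanSingleton R E e2) ∘ₗ D.mulBy b2 D.hb2
  have hφf : ∀ m, π (φf m) = F • m := by
    intro m
    change π ((D.mulBy b1 D.hb1 m) • e1) = _
    rw [map_smul, he1]
    apply Subtype.ext
    change b1 * (m : S) * a1 = f * m
    rw [D.hf]; ring
  have hφg : ∀ m, π (φg m) = G • m := by
    intro m
    change π ((D.mulBy b2 D.hb2 m) • e2) = _
    rw [map_smul, he2]
    apply Subtype.ext
    change b2 * (m : S) * a2 = g * m
    rw [D.hg]; ring
  let δ : M →ₗ[R] E := G • φf - F • φg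
  have hδ : ∀ m, δ m ∈ LinearMap.range i := by
    intro m
    rw [hex]
    change π (G • φf m - F • φg m) = 0
    rw [map_sub, map_smul, map_smul, hφf, hφg, smul_comm, sub_self]
  let iE := LinearEquiv.ofInjective i hi
  let θ : M →ₗ[R] R := iE.symm.toLinearMap ∘ₗ δ.codRestrict _ hδ
  have hθ : ∀ m, i (θ m) = G • φf m - F • φg m := by
    intro m
    have : iE (θ m) = _ := LinearEquiv.apply_symm_apply iE _
    exact congrArg Subtype.val this
  obtain ⟨h, hM', hh⟩ := D.hom_eq θ
  obtain ⟨A, hA, B, hB, hAB⟩ := D.idlM' h hM' (H h hM' (by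
    intro m hm
    obtain ⟨e, he⟩ := hπ ⟨m, hm⟩
    obtain ⟨α, hα⟩ := hki (φf ⟨m, hm⟩ - F • e) (by rw [map_sub, hφf, map_smul, he, sub_self])
    obtain ⟨β, hβ⟩ := hki (φg ⟨m, hm⟩ - G • e) (by rw [map_sub, hφg, map_smul, he, sub_self])
    have e1 : θ ⟨m, hm⟩ = G * α - F * β := by
      apply hi
      rw [hθ, map_sub, ← smul_eq_mul, ← smul_eq_mul, map_smul, map_smul, hα, hβ]
      rw [smul_sub, smul_sub, smul_comm G F]
      abel
    have e2 := hh ⟨m, hm⟩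
    rw [e1] at e2
    refine ⟨-(β : S), α, ?_⟩
    rw [show h * m = _ from e2.symm]
    change g * (α : S) - f * β = _
    ring))
  let φf' := φf - i ∘ₗ D.mulBy B hB
  let φg' := φg + i ∘ₗ D.mulBy A hA
  have hcom : ∀ m, G • φf' m = F • φg' m := by
    intro m
    change G • (φf m - i (D.mulBy B hB m)) = F • (φg m + i (D.mulBy A hA m))
    have h1 : θ m = G • D.mulBy B hB m + F • D.mulBy A hA m := by
      apply Subtype.ext
      rw [hh, hAB]
      change _ = g * (B * (m : S)) + f * (A * m)
      ring
    have h2 := hθ m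
    rw [h1, map_add, map_smul, map_smul] at h2
    rw [smul_sub, smul_add, sub_eq_iff_eq_add, add_assoc, add_comm (F • i _), h2]
    abel
  have hFM : ∀ m m' : M, F • m = F • m' → m = m' := by
    intro m m' hmm
    apply Subtype.ext
    have h1 : f * (m : S) = f * m' := congrArg Subtype.val hmm
    exact sub_eq_zero.1 (D.hnzd _ (by rw [mul_sub, h1, sub_self]))
  have hFR : ∀ r : R, F * r = 0 → r = 0 := by
    intro r hr
    apply Subtype.ext
    exact D.hnzd _ (congrArg Subtype.val hr)
  have hFE : ∀ e e' : E, F • e = F • e' → e = e' := by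
    intro e e' hee
    have h0 : F • (e - e') = 0 := by rw [smul_sub, hee, sub_self]
    have h1 : π (e - e') = 0 := by
      apply hFM
      rw [← map_smul, h0, map_zero, smul_zero]
    obtain ⟨r, hr⟩ := hki _ h1
    have : r = 0 := by
      apply hFR
      apply hi
      rw [← smul_eq_mul, map_smul, hr, h0, map_zero]
    rw [this, map_zero] at hr
    exact (sub_eq_zero.1 hr.symm)
  have hex' : ∀ m, ∃ s, F • s = φf' m ∧ π s = m := by
    intro m
    obtain ⟨e, he⟩ := hπ m
    obtain ⟨α, hα⟩ := hki (φf' m - F • e) (by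
      change π (φf m - i _ - _) = 0
      rw [map_sub, map_sub, hφf, map_smul, he, hik, sub_zero, sub_self])
    obtain ⟨β, hβ⟩ := hki (φg' m - G • e) (by
      change π (φg m + i _ - _) = 0
      rw [map_sub, map_add, hφg, map_smul, he, hik, add_zero, sub_self])
    have h1 : F * β = G * α := by
      apply hi
      rw [← smul_eq_mul, ← smul_eq_mul, map_smul, map_smul, hα, hβ, smul_sub, smul_sub, hcom,
        smul_comm]
    obtain ⟨w, hw⟩ := D.hreg β α (congrArg Subtype.val h1)
    have hwR : w ∈ R := D.satR _ (hw ▸ α.2)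
    refine ⟨e + i ⟨w, hwR⟩, ?_, by rw [map_add, hik, he, add_zero]⟩
    have h2 : F • (⟨w, hwR⟩ : R) = α := Subtype.ext hw.symm
    rw [smul_add, ← map_smul, h2, hα]
    abel
  choose s hs1 hs2 using hex'
  refine ⟨⟨⟨s, fun x y => ?_⟩, fun r x => ?_⟩, hs2⟩
  · apply hFE
    rw [smul_add, hs1, hs1, hs1, map_add]
  · apply hFE
    simp only [RingHom.id_apply]
    rw [smul_comm, hs1, hs1, map_smul]

theorem of_splits (D : KData S R M M' f g a1 b1 a2 b2) (H : ExtSplits R M R) :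
    ∀ h ∈ M', (∀ m ∈ M, ∃ A B, h * m = f * A + g * B) → ∃ A B, h = f * A + g * B := by
  intro h hM' hm
  let F : R := ⟨f, D.fR⟩
  let G : R := ⟨g, D.gR⟩
  let χ : M × R × R →ₗ[R] R :=
    D.mulBy h hM' ∘ₗ LinearMap.fst R M (R × R)
      - F • (LinearMap.fst R R R ∘ₗ LinearMap.snd R M (R × R))
      - G • (LinearMap.snd R R R ∘ₗ LinearMap.snd R M (R × R))
  have hχ : ∀ (m : M) (α β : R), (χ (m, α, β) : S) = h * m - f * α - g * β := fun m α β => rfl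
  let E := LinearMap.ker χ
  have hE : ∀ (m : M) (α β : R), (m, α, β) ∈ E ↔ h * (m : S) = f * α + g * β := by
    intro m α β
    rw [LinearMap.mem_ker, ← ZeroMemClass.coe_eq_zero, hχ, sub_sub, sub_eq_zero]
  let i0 : R →ₗ[R] M × R × R :=
    LinearMap.toSpanSingleton R (M × R × R) (0, G, -F)
  have hi0 : ∀ r, i0 r = (0, r * G, r * (-F)) := fun r => by
    change r • ((0 : M), G, -F) = _
    simp
  let i : R →ₗ[R] E := i0.codRestrict E (fun r => by
    rw [hi0, hE]
    change h * 0 = f * ((r : S) * g) + g * (r * (-f))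
    ring)
  let π : E →ₗ[R] M := LinearMap.fst R M (R × R) ∘ₗ E.subtype
  have hiv : ∀ r, (i r : M × R × R) = (0, r * G, r * (-F)) := hi0
  have hi : Function.Injective i := by
    refine (injective_iff_map_eq_zero i).2 ?_
    intro r hr
    have h1 : (i r : M × R × R) = 0 := congrArg Subtype.val hr
    rw [hiv] at h1
    have h2 : r * (-F) = 0 := congrArg (fun z => z.2.2) h1
    have h3 : (r : S) * (-f) = 0 := congrArg Subtype.val h2
    apply Subtype.ext
    exact D.hnzd _ (by linear_combination -h3)
  have hπ : Function.Surjective π := by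
    intro m
    obtain ⟨A, B, hAB⟩ := hm m m.2
    obtain ⟨A, hA, B, hB, hAB⟩ := D.idlR _ (by exact D.hMM _ m.2 _ hM') ⟨A, B, hAB⟩
    exact ⟨⟨(m, ⟨A, hA⟩, ⟨B, hB⟩), (hE _ _ _).2 hAB⟩, rfl⟩
  have hex : LinearMap.range i = LinearMap.ker π := by
    apply le_antisymm
    · rintro _ ⟨r, rfl⟩
      change (i r : M × R × R).1 = 0
      rw [hiv]
    · rintro ⟨⟨m, α, β⟩, he⟩ hme
      have hm0 : m = 0 := hme
      subst hm0
      have he' := (hE _ _ _).1 he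
      have h1 : f * (α : S) = g * (-β) := by
        have : h * ((0 : M) : S) = 0 := by simp
        rw [this] at he'
        linear_combination -he'
      obtain ⟨w, hw⟩ := D.hreg _ _ h1
      have hwR : w ∈ R := D.satR _ (hw ▸ (neg_mem β.2))
      refine ⟨⟨w, hwR⟩, ?_⟩
      apply Subtype.ext
      rw [hiv]
      refine Prod.ext rfl (Prod.ext (Subtype.ext ?_) (Subtype.ext ?_))
      · change w * g = α
        refine sub_eq_zero.1 (D.hnzd _ ?_)
        rw [mul_sub, h1, hw]; ring
      · change w * (-f) = β
        linear_combination hw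
  obtain ⟨σ, hσ⟩ := H E i π hi hπ hex
  let p1 : E →ₗ[R] R := LinearMap.fst R R R ∘ₗ LinearMap.snd R M (R × R) ∘ₗ E.subtype
  let p2 : E →ₗ[R] R := LinearMap.snd R R R ∘ₗ LinearMap.snd R M (R × R) ∘ₗ E.subtype
  obtain ⟨A, hA, hA'⟩ := D.hom_eq (p1 ∘ₗ σ)
  obtain ⟨B, hB, hB'⟩ := D.hom_eq (p2 ∘ₗ σ)
  refine ⟨A, B, sub_eq_zero.1 (D.cancel _ ?_)⟩
  intro m hmM
  have e1 := hA' ⟨m, hmM⟩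
  have e2 := hB' ⟨m, hmM⟩
  have e3 : h * ((σ ⟨m, hmM⟩ : M × R × R).1 : S) = f * (p1 (σ ⟨m, hmM⟩) : R)
      + g * (p2 (σ ⟨m, hmM⟩) : R) := (hE _ _ _).1 (σ ⟨m, hmM⟩).2
  have e4 : (σ ⟨m, hmM⟩ : M × R × R).1 = ⟨m, hmM⟩ := hσ _
  rw [e4] at e3
  simp only [LinearMap.comp_apply] at e1 e2 e3
  simp only [e1, e2] at e3
  linear_combination e3

end KData

/-- `u` is bad for `(p,q)`. -/
def IBad (p q u : ℤ) : Prop :=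
  ∃ k s w : ℤ, 1 ≤ k ∧ 0 < w ∧ u = w + k * q - s * p ∧ 0 ≤ k * q - s * p ∧
    ∀ m t : ℤ, 1 ≤ m → m ≤ k → 0 < t * p - m * q → t * p - m * q ≤ w → False

lemma iBad_step (p q q' α u : ℤ) (hq : 0 < q) (hqp : q < p) (hα : p = α * q - q')
    (hu : u < q) : IBad p q u ↔ IBad q q' u := by
  constructor
  · rintro ⟨k, s, w, hk, hw, huw, h0, H⟩
    have hs : 1 ≤ s := by
      by_contra hs
      have : s ≤ 0 := by omega
      nlinarith
    refine ⟨s, α * s - k, w, hs, hw, ?_, ?_, ?_⟩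
    · rw [huw, hα]; ring
    · have : s * q' - (α * s - k) * q = k * q - s * p := by rw [hα]; ring
      rw [this]; exact h0
    · intro m' t' hm1 hm2 h1 h2
      have e : m' * p - (α * m' - t') * q = t' * q - m' * q' := by rw [hα]; ring
      have hmp : p ≤ m' * p := by nlinarith
      have hsp : m' * p ≤ s * p := by nlinarith
      refine H (α * m' - t') m' ?_ ?_ (by rw [e]; exact h1) (by rw [e]; exact h2)
      · by_contra hc
        have : α * m' - t' ≤ 0 := by omega
        nlinarith
      · by_contra hc
        have : k + 1 ≤ α * m' - t' := by omega
        nlinarith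
  · rintro ⟨k', s', w, hk, hw, huw, h0, H⟩
    have e0 : (α * k' - s') * q - k' * p = k' * q' - s' * q := by rw [hα]; ring
    have hkp : p ≤ k' * p := by nlinarith
    refine ⟨α * k' - s', k', w, ?_, hw, ?_, ?_, ?_⟩
    · by_contra hc
      have : α * k' - s' ≤ 0 := by omega
      nlinarith
    · linarith
    · rw [e0]; exact h0
    · intro m t hm1 hm2 h1 h2
      have e : (α * t - m) * q - t * q' = t * p - m * q := by rw [hα]; ring
      refine H t (α * t - m) ?_ ?_ (by rw [e]; exact h1) (by rw [e]; exact h2)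
      · by_contra hc
        have : t ≤ 0 := by omega
        nlinarith
      · by_contra hc
        have : k' + 1 ≤ t := by omega
        nlinarith

lemma iSeq_succ (p q : ℕ) (hq : q ≠ 0) (t : ℕ) :
    iSeq p q (t + 1) = iSeq q ((-(p : ℤ)) % (q : ℤ)).toNat t := by
  induction t using Nat.twoStepInduction with
  | zero => simp [iSeq]
  | one => simp [iSeq, hq]
  | more t h1 h2 =>
    rw [iSeq, h1, h2]
    conv_rhs => rw [iSeq]

lemma iSet_succ (p q : ℕ) (hq : q ≠ 0) (u : ℕ) :
    u ∈ ISet p q ↔ u = p ∨ u ∈ ISet q ((-(p : ℤ)) % (q : ℤ)).toNat := by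
  constructor
  · rintro ⟨t, rfl⟩
    cases t with
    | zero => left; simp [iSeq]
    | succ t => right; exact ⟨t, (iSeq_succ p q hq t).symm⟩
  · rintro (rfl | ⟨t, rfl⟩)
    · exact ⟨0, by simp [iSeq]⟩
    · exact ⟨t + 1, iSeq_succ p q hq t⟩

lemma iSet_zero (p u : ℕ) : u ∈ ISet p 0 ↔ u = p ∨ u = 0 := by
  have h : ∀ t, iSeq p 0 (t + 1) = 0 := by
    intro t
    induction t with
    | zero => simp [iSeq]
    | succ t ih => rw [iSeq, ih]; simp
  constructor
  · rintro ⟨t, rfl⟩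
    cases t with
    | zero => left; simp [iSeq]
    | succ t => right; exact h t
  · rintro (rfl | rfl)
    · exact ⟨0, by simp [iSeq]⟩
    · exact ⟨1, h 0⟩

lemma not_iBad_zero (p q : ℤ) : ¬ IBad p q 0 := by
  rintro ⟨k, s, w, hk, hw, huw, h0, H⟩
  linarith

lemma not_iBad_self (p q : ℤ) : ¬ IBad p q p := by
  rintro ⟨k, s, w, hk, hw, huw, h0, H⟩
  refine H k (s + 1) hk le_rfl ?_ ?_ <;> linarith

lemma not_iBad_q (p q : ℤ) (hqp : q < p) (hq : 0 < q) : ¬ IBad p q q := by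
  rintro ⟨k, s, w, hk, hw, huw, h0, H⟩
  rcases eq_or_lt_of_le hk with rfl | hk
  · have hs : 1 ≤ s := by
      by_contra hs
      have : s ≤ 0 := by omega
      nlinarith
    nlinarith
  · refine H (k - 1) s (by omega) (by omega) ?_ ?_ <;> linarith

lemma iBad_mid (p q u : ℤ) (hq : 0 ≤ q) (h1 : q < u) (h2 : u < p) : IBad p q u := by
  refine ⟨1, 0, u - q, le_rfl, by linarith, by ring, by linarith, ?_⟩
  intro m t hm1 hm2 h3 h4
  obtain rfl : m = 1 := by omega
  have : t ≤ 0 := by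
    by_contra hc
    have : 1 ≤ t := by omega
    nlinarith
  nlinarith

lemma iSet_iff_not_iBad (q : ℕ) : ∀ p u : ℕ, q < p →
    (u ∈ ISet p q → u ≤ p) ∧ (u ≤ p → (u ∈ ISet p q ↔ ¬ IBad p q u)) := by
  induction q using Nat.strong_induction_on with
  | _ q ih =>
    intro p u hqp
    rcases Nat.eq_zero_or_pos q with rfl | hq
    · rw [iSet_zero]
      refine ⟨by omega, fun hu => ?_⟩
      constructor
      · rintro (rfl | rfl)
        · exact not_iBad_self _ _
        · exact_mod_cast not_iBad_zero _ _
      · intro h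
        by_contra hc
        exact h (iBad_mid _ _ _ (by simp) (by push_cast; omega) (by omega))
    · rw [iSet_succ p q hq.ne']
      set q' := ((-(p : ℤ)) % (q : ℤ)).toNat with hq'
      have hqz : (0 : ℤ) < q := by exact_mod_cast hq
      have hq'z : (q' : ℤ) = (-(p : ℤ)) % (q : ℤ) :=
        Int.toNat_of_nonneg (Int.emod_nonneg _ hqz.ne')
      have hlt : q' < q := by
        have := Int.emod_lt_of_pos (-(p : ℤ)) hqz
        omega
      obtain ⟨h1, h2⟩ := ih q' hlt q u hlt
      refine ⟨fun h => h.elim (fun h => h.le) (fun h => (h1 h).trans hqp.le), fun hu => ?_⟩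
      rcases lt_trichotomy u q with h | rfl | h
      · rw [h2 h.le, iBad_step p q q' (-(-(p : ℤ) / q)) u hqz (by omega) ?_ (by omega)]
        · constructor
          · rintro (h | h)
            · omega
            · exact h
          · exact Or.inr
        · have := Int.emod_add_mul_ediv (-(p : ℤ)) q
          rw [hq'z]
          linarith
      · rw [h2 le_rfl]
        have a1 := not_iBad_self (u : ℤ) (q' : ℤ)
        have a2 := not_iBad_q (p : ℤ) (u : ℤ) (by omega) hqz
        tauto
      · rcases eq_or_lt_of_le hu with rfl | hu
        · have := not_iBad_self (u : ℤ) (q : ℤ)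
          tauto
        · have := iBad_mid (p : ℤ) q u (by omega) (by omega) (by omega)
          constructor
          · rintro (h | h)
            · omega
            · have := h1 h; omega
          · intro h; exact absurd this h

/-- The usable form of speciality. -/
def Spec (p q : ℕ) (u : ℕ) : Prop :=
  ∀ k : ℕ, 1 ≤ k → ((k : ℤ) * q) % p < u → ∃ l : ℕ, l < k ∧
    ((k : ℤ) * q) % p + (u - (l : ℤ) * q) % p < u

lemma spec_iff_not_iBad (p q u : ℕ) (hp : 0 < p) (hu : u ≤ p) :
    Spec p q u ↔ ¬ IBad p q u := by
  have hpz : (0 : ℤ) < p := by exact_mod_cast hp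
  constructor
  · rintro H ⟨k, s, w, hk, hw, huw, h0, H'⟩
    have hmod : (k * q) % p = k * q - s * p := by
      rw [show (k * q : ℤ) = (k * q - s * p) + s * p by ring, Int.add_mul_emod_self_right,
        Int.emod_eq_of_lt h0 (by omega)]
      ring
    obtain ⟨l, hl, h2⟩ := H k.toNat (by omega) (by
      rw [Int.toNat_of_nonneg (by omega), hmod]; omega)
    rw [Int.toNat_of_nonneg (by omega), hmod] at h2
    have e := Int.emod_add_mul_ediv ((u : ℤ) - l * q) p
    set r := ((u : ℤ) - l * q) % p
    set d := ((u : ℤ) - l * q) / p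
    have hr : 0 ≤ r := Int.emod_nonneg _ hpz.ne'
    refine H' (k - l) (d + s) (by omega) (by omega) ?_ ?_
    · have : (d + s) * p - (k - l) * q = w - r := by linarith
      rw [this]; linarith
    · have : (d + s) * p - (k - l) * q = w - r := by linarith
      rw [this]; linarith
  · intro H k hk hku
    by_contra hc
    push Not at hc
    apply H
    have e := Int.emod_add_mul_ediv ((k : ℤ) * q) p
    have ht0 : 0 ≤ ((k : ℤ) * q) % p := Int.emod_nonneg _ hpz.ne'
    set t0 := ((k : ℤ) * q) % p
    set s := ((k : ℤ) * q) / p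
    refine ⟨k, s, u - t0, by omega, by omega, by linarith, by linarith, ?_⟩
    intro m t hm1 hm2 h1 h2
    have h3 := hc (k - m).toNat (by omega)
    rw [Int.toNat_of_nonneg (by omega)] at h3
    have e2 : ((u : ℤ) - (k - m) * q) = (u - t0 - (t * p - m * q)) + (t - s) * p := by linarith
    rw [e2, Int.add_mul_emod_self_right, Int.emod_eq_of_lt (by omega) (by omega)] at h3
    omega

lemma spec_iff (p q u : ℕ) (hqp : q < p) (hu : u ≤ p) : Spec p q u ↔ u ∈ ISet p q := by
  rw [spec_iff_not_iBad p q u (by omega) hu, (iSet_iff_not_iBad q p u hqp).2 hu]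

/-- The properties of the grading group used in the proof. -/
structure LD {L : Type} [AddCommGroup L] (p q : ℕ) (x e : L) (H Lp : AddSubmonoid L)
    (res : L →+ ZMod p) : Prop where
  hp : 2 ≤ p
  resH : ∀ z ∈ H, res z = 0
  HLp : H ≤ Lp
  eLp : e ∈ Lp
  rese : res e = 1
  subH : ∀ z ∈ Lp, ∀ s : ℕ, s < p → res z = s → z - s • e ∈ H
  big : ∀ z ∈ Lp, ∃ N0 : ℕ, ∀ N, N0 ≤ N → (p * N) • e - z ∈ Lp
  xLp : x ∈ Lp
  neg : ∀ u' ≤ p, ∀ m : ℕ, 1 ≤ m → u' • e - m • x ∉ Lp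
  per : ∃ K N0 : ℕ, 1 ≤ N0 ∧ (p * N0) • e = K • x
  resx : res x = -(q : ZMod p)
  cop : Nat.Coprime q p

namespace LD

variable {L : Type} [AddCommGroup L] {p q : ℕ} {x e : L} {H Lp : AddSubmonoid L}
    {res : L →+ ZMod p}

lemma res_n (E : LD p q x e H Lp res) (N : ℕ) : res ((p * N) • e) = 0 := by
  rw [map_nsmul, E.rese]; simp

lemma zero_res (E : LD p q x e H Lp res) {z : L} (hz : z ∈ Lp) (h : res z = 0) : z ∈ H := by
  have := E.subH z hz 0 (by have := E.hp; omega) (by simpa using h)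
  simpa using this

lemma res_eq_mod (E : LD p q x e H Lp res) (z : ℤ) (t : ℕ) (ht : t < p)
    (h : (z : ZMod p) = t) : z % p = t := by
  have h1 : (z : ZMod p) = ((t : ℤ) : ZMod p) := by rw [h]; simp
  have h2 := (ZMod.intCast_eq_intCast_iff _ _ _).1 h1
  rw [Int.ModEq] at h2
  rw [h2]
  exact Int.emod_eq_of_lt (by omega) (by exact_mod_cast ht)

lemma mod_res (z : ℤ) (t : ℕ) (h : z % p = t) : (z : ZMod p) = t := by
  have : ((z % p : ℤ) : ZMod p) = (z : ZMod p) := by simp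
  rw [← this, h]; simp

end LD

section Main

variable {L : Type} [AddCommGroup L] {S : Type} [CommRing S] [Algebra ℂ S]
  {G : L → Submodule ℂ S} {X : S} {e : L} {ε : S →ₐ[ℂ] ℂ} {H Lp : AddSubmonoid L}
  {p q : ℕ} {x : L} {res : L →+ ZMod p}

/-- The ideal `(f, g)`. -/
def JJ (f g : S) : Ideal S := Ideal.span {f, g}

lemma mem_JJ {f g s : S} : s ∈ JJ f g ↔ ∃ A B, s = f * A + g * B := by
  rw [JJ, Ideal.mem_span_pair]
  constructor
  · rintro ⟨a, b, rfl⟩; exact ⟨a, b, by ring⟩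
  · rintro ⟨a, b, rfl⟩; exact ⟨a, b, by ring⟩

lemma JJ_f {f g : S} (s : S) : f * s ∈ JJ f g := mem_JJ.2 ⟨s, 0, by ring⟩

lemma JJ_g {f g : S} (s : S) : g * s ∈ JJ f g := mem_JJ.2 ⟨0, s, by ring⟩

lemma JJ_comp (D : GD G X e ε H Lp) {d : L} {f g : S} (hf : f ∈ G d) (hg : g ∈ G d) (w : L)
    {s : S} (hs : s ∈ JJ f g) : D.c w s ∈ JJ f g := by
  obtain ⟨A, B, rfl⟩ := mem_JJ.1 hs
  rw [map_add, D.c_mul (w := w - d) (by abel) hf, D.c_mul (w := w - d) (by abel) hg]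
  exact add_mem (JJ_f _) (JJ_g _)

lemma red_step (D : GD G X e ε H Lp) {w d : L} {α g : S} (hα : α ∈ G w) (hg : g ∈ G d)
    (hge : ε g ≠ 0) (h : ε α ≠ 0 → w - d ∈ H) : ∃ α' ∈ G (w - e), ∃ γ, α = X * α' + g * γ := by
  by_cases h0 : ε α = 0
  · obtain ⟨α', h1, h2⟩ := D.k1h hα h0
    exact ⟨α', h1, 0, by rw [mul_zero, add_zero, h2]⟩
  · obtain ⟨γ, hγ, hγe⟩ := D.f6 _ (h h0)
    let γ' := (ε α / (ε g * ε γ)) • γ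
    have h1 : α - g * γ' ∈ G w := by
      refine sub_mem hα ?_
      have := D.mul hg (Submodule.smul_mem _ (ε α / (ε g * ε γ)) hγ)
      rwa [show d + (w - d) = w by abel] at this
    have h2 : ε (α - g * γ') = 0 := by
      simp only [γ', map_sub, map_mul, map_smul, smul_eq_mul]
      field_simp
      ring
    obtain ⟨α', h3, h4⟩ := D.k1h h1 h2
    exact ⟨α', h3, γ', by rw [← h4]; ring⟩

theorem thmA_hom (D : GD G X e ε H Lp) (E : LD p q x e H Lp res) (u : ℕ) (hu : u ≤ p)
    (hspec : Spec p q u) (N n n1 K : ℕ) (hn : n = p * N) (hn1 : n = u + n1)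
    (hK : n • e = K • x) {g : S} (hg : g ∈ G (n • e)) (hge : ε g ≠ 0)
    (k' : ℤ) (h : S) (hh : h ∈ G (-(u • e) + k' • x))
    (hm : ∀ l : ℤ, ∀ m ∈ G (u • e + l • x), h * m ∈ JJ (X ^ n) g) : h ∈ JJ (X ^ n) g := by
  obtain ⟨k, hk⟩ : ∃ k : ℤ, k = 2 * K - k' := ⟨_, rfl⟩
  have hf : X ^ n ∈ G (n • e) := D.pow_mem n
  have hresn : res (n • e) = 0 := by rw [hn]; exact E.res_n N
  obtain ⟨α, hα, hα2⟩ : ∃ α ∈ G (n • e - k • x), h - X ^ n1 * α ∈ JJ (X ^ n) g := by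
    have h1 := hm 0 (X ^ u) (by simpa using D.pow_mem u)
    obtain ⟨α, hα, β, hβ, h2⟩ := D.idl_hom hf hg (D.mul hh (D.pow_mem u)) (mem_JJ.1 h1)
    have hd : -(u • e) + k' • x + u • e - n • e = n • e - k • x := by
      rw [hk]
      linear_combination (norm := module) (-2 : ℤ) • hK
    rw [hd] at hα hβ
    obtain ⟨β', hβ', rfl⟩ := D.strip (γ := h - X ^ n1 * α) u hβ hge (by
      rw [hn1, pow_add] at h2
      linear_combination -h2)
    refine ⟨α, hα, ?_⟩
    have : h - X ^ n1 * α = g * β' := by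
      apply D.cancel_pow u
      rw [hn1, pow_add] at h2
      linear_combination h2
    rw [this]
    exact JJ_g _
  have key : ∀ t : ℕ, t ≤ u → ∃ α ∈ G (n • e - k • x - t • e),
      h - X ^ (n1 + t) * α ∈ JJ (X ^ n) g := by
    intro t
    induction t with
    | zero => intro _; exact ⟨α, by simpa using hα, by simpa using hα2⟩
    | succ t ih =>
      intro ht
      obtain ⟨α, hα, hα2⟩ := ih (by omega)
      obtain ⟨α', hα', γ, hγ⟩ := red_step D hα hg hge (by
        intro hα0
        have hwH := D.f5 _ _ hα hα0
        have hres : ((k * q : ℤ) : ZMod p) = t := by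
          have := E.resH _ hwH
          rw [map_sub, map_sub, hresn, map_zsmul, map_nsmul, E.resx, E.rese] at this
          simp only [zsmul_eq_mul, nsmul_eq_mul, mul_one] at this
          push_cast
          linear_combination this
        have htp : t < p := by omega
        have hd1 : n • e - k • x - t • e - n • e = -(k • x) - t • e := by abel
        rw [hd1]
        by_cases hk0 : k ≤ 0
        · refine E.subH _ ?_ t htp ?_
          · obtain ⟨k2, hk2⟩ := Int.eq_ofNat_of_zero_le (show 0 ≤ -k by omega)
            rw [← neg_smul, hk2, natCast_zsmul]
            exact nsmul_mem E.xLp _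
          · rw [map_neg, map_zsmul, E.resx, ← hres]
            simp only [zsmul_eq_mul]
            push_cast; ring
        · exfalso
          obtain ⟨k2, rfl⟩ := Int.eq_ofNat_of_zero_le (show 0 ≤ k by omega)
          have hmod := E.res_eq_mod _ t htp hres
          obtain ⟨l, hl, hls⟩ := hspec k2 (by omega) (by rw [hmod]; exact_mod_cast ht)
          rw [hmod] at hls
          have hp0 : (0 : ℤ) < p := by have := E.hp; omega
          obtain ⟨s, hs⟩ := Int.eq_ofNat_of_zero_le
            (Int.emod_nonneg ((u : ℤ) - l * q) (show (p : ℤ) ≠ 0 by omega))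
          have hsp : s < p := by
            have := Int.emod_lt_of_pos ((u : ℤ) - l * q) hp0
            omega
          have hts : t + s < u := by omega
          have hyl : u • e + l • x ∈ Lp := add_mem (nsmul_mem E.eLp _) (nsmul_mem E.xLp _)
          have hyr : res (u • e + l • x) = s := by
            rw [← LD.mod_res _ s hs, map_add, map_nsmul, map_nsmul, E.rese, E.resx]
            simp only [nsmul_eq_mul, mul_one]
            push_cast; ring
          obtain ⟨A, hA, hA0⟩ := D.f6 _ (E.subH _ hyl s hsp hyr)
          have hmm : X ^ s * A ∈ G (u • e + (l : ℤ) • x) := by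
            have := D.mul (D.pow_mem s) hA
            rwa [show s • e + (u • e + l • x - s • e) = u • e + (l : ℤ) • x by module] at this
          have h1 := hm l _ hmm
          have h2 : X ^ (n1 + t + s) * (α * A) ∈ JJ (X ^ n) g := by
            have := sub_mem h1 (Ideal.mul_mem_right (X ^ s * A) _ hα2)
            convert this using 1
            ring
          obtain ⟨a, ha, β, hβ, h3⟩ := D.idl_hom hf hg
            (D.mul (D.pow_mem (n1 + t + s)) (D.mul hα hA)) (mem_JJ.1 h2)
          obtain ⟨r, hr⟩ : ∃ r, u = t + s + (r + 1) := ⟨u - (t + s) - 1, by omega⟩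
          have hnr : n = (n1 + t + s) + (r + 1) := by omega
          have hfx : X ^ n = X ^ (n1 + t + s) * X ^ (r + 1) := by rw [← pow_add, ← hnr]
          rw [hfx] at h3
          obtain ⟨β', hβ', rfl⟩ := D.strip (γ := α * A - X ^ (r + 1) * a) (n1 + t + s) hβ hge (by
            linear_combination -h3)
          have h4 : α * A = X ^ (r + 1) * a + g * β' := by
            apply D.cancel_pow (n1 + t + s)
            linear_combination h3
          have h5 : ε β' ≠ 0 := by
            intro h0
            have := congrArg ε h4
            rw [map_add, map_mul, map_mul, map_mul, map_pow, D.eX, h0] at this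
            simp at this
            tauto
          have h6 := E.HLp (D.f5 _ _ hβ' h5)
          refine E.neg (r + 1) (by omega) (k2 - l) (by omega) ?_
          convert h6 using 1
          obtain ⟨k3, rfl⟩ : ∃ k3, k2 = l + k3 := ⟨k2 - l, by omega⟩
          rw [Nat.add_sub_cancel_left, hr]
          push_cast
          module)
      refine ⟨α', ?_, ?_⟩
      · rwa [succ_nsmul, ← sub_sub]
      · have : h - X ^ (n1 + (t + 1)) * α' = (h - X ^ (n1 + t) * α) + g * (γ * X ^ (n1 + t)) := by
          rw [hγ]; ring
        rw [this]
        exact add_mem hα2 (JJ_g _)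
  obtain ⟨α, hα, hα2⟩ := key u le_rfl
  have : h = (h - X ^ (n1 + u) * α) + X ^ n * α := by
    rw [hn1, add_comm u n1]; ring
  rw [this]
  exact add_mem hα2 (JJ_f _)

theorem thmA (D : GD G X e ε H Lp) (E : LD p q x e H Lp res) (u : ℕ) (hu : u ≤ p)
    (hspec : Spec p q u) (N n n1 K : ℕ) (hn : n = p * N) (hn1 : n = u + n1)
    (hK : n • e = K • x) {g : S} (hg : g ∈ G (n • e)) (hge : ε g ≠ 0)
    (h : S) (hh : h ∈ GD.T G (-(u • e)) x)
    (hm : ∀ m ∈ GD.T G (u • e) x, h * m ∈ JJ (X ^ n) g) : h ∈ JJ (X ^ n) g := by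
  have hf : X ^ n ∈ G (n • e) := D.pow_mem n
  refine D.of_comps ((JJ (X ^ n) g).restrictScalars ℂ) h fun w => ?_
  rw [Submodule.restrictScalars_mem]
  by_cases hw : ∃ k : ℤ, w = -(u • e) + k • x
  · obtain ⟨k, rfl⟩ := hw
    refine thmA_hom D E u hu hspec N n n1 K hn hn1 hK hg hge k _ (D.c_mem _ _) ?_
    intro l m hml
    have h1 := JJ_comp D hf hg (-(u • e) + k • x + (u • e + l • x)) (hm m (GD.mem_T l hml))
    rwa [mul_comm h m, D.c_mul rfl hml, mul_comm] at h1
  · have : D.c w h = 0 := by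
      refine GD.T_ind (motive := fun h => D.c w h = 0) ?_ ?_ h hh
      · intro k s hs
        exact D.c_ne (fun h' => hw ⟨k, h'.symm⟩) hs
      · intro a b ha hb; rw [map_add, ha, hb, add_zero]
    rw [this]; exact zero_mem _

end Main

section Main2

variable {L : Type} [AddCommGroup L] {S : Type} [CommRing S] [Algebra ℂ S]
  {G : L → Submodule ℂ S} {X : S} {e : L} {ε : S →ₐ[ℂ] ℂ} {H Lp : AddSubmonoid L}
  {p q : ℕ} {x : L} {res : L →+ ZMod p}

theorem thmB (D : GD G X e ε H Lp) (E : LD p q x e H Lp res) (u : ℕ) (hu : u ≤ p)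
    (hspec : ¬ Spec p q u) : ∃ N1 : ℕ, ∀ N n n1 K : ℕ, N1 ≤ N → n = p * N → n = u + n1 →
      n • e = K • x → ∀ g ∈ G (n • e), ε g ≠ 0 →
      ∃ h ∈ GD.T G (-(u • e)) x,
        (∀ m ∈ GD.T G (u • e) x, h * m ∈ JJ (X ^ n) g) ∧ h ∉ JJ (X ^ n) g := by
  rw [Spec] at hspec
  push Not at hspec
  obtain ⟨k, hk1, hku, hl⟩ := hspec
  have hp0 : (0 : ℤ) < p := by have := E.hp; omega
  obtain ⟨t, ht⟩ := Int.eq_ofNat_of_zero_le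
    (Int.emod_nonneg ((k : ℤ) * q) (show (p : ℤ) ≠ 0 by omega))
  rw [ht] at hku hl
  have htu : t < u := by exact_mod_cast hku
  have htr : ((k : ZMod p) * q) = t := by
    have := LD.mod_res _ t ht
    push_cast at this
    exact this
  have hz : k • x + t • e ∈ Lp := add_mem (nsmul_mem E.xLp _) (nsmul_mem E.eLp _)
  obtain ⟨N1, hN1⟩ := E.big _ hz
  refine ⟨N1, ?_⟩
  intro N n n1 K hN hn hn1 hK g hg hge
  have hf : X ^ n ∈ G (n • e) := D.pow_mem n
  have hresn : res (n • e) = 0 := by rw [hn]; exact E.res_n N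
  have h1 := hN1 N hN
  rw [← hn] at h1
  have h2 := E.zero_res h1 (by
    rw [map_sub, hresn, map_add, map_nsmul, map_nsmul, E.rese, E.resx]
    simp only [nsmul_eq_mul, mul_one]
    linear_combination htr)
  obtain ⟨α, hα, hαe⟩ := D.f6 _ h2
  have hh : X ^ (n1 + t) * α ∈ G (-(u • e) + (2 * K - k : ℤ) • x) := by
    have := D.mul (D.pow_mem (n1 + t)) hα
    convert this using 2
    rw [hn1] at hK ⊢
    linear_combination (norm := module) (-2 : ℤ) • hK
  obtain ⟨r, hr⟩ : ∃ r, u = t + (r + 1) := ⟨u - t - 1, by omega⟩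
  have hnr : n = (n1 + t) + (r + 1) := by omega
  have hfx : X ^ n = X ^ (n1 + t) * X ^ (r + 1) := by rw [← pow_add, ← hnr]
  refine ⟨X ^ (n1 + t) * α, GD.mem_T _ hh, ?_, ?_⟩
  · intro m hm
    refine GD.T_ind (motive := fun m => X ^ (n1 + t) * α * m ∈ JJ (X ^ n) g) ?_ ?_ m hm
    · clear m hm
      intro l m hm
      by_cases hl0 : l < 0
      · have : m = 0 := by
          by_contra hm0
          have h3 := D.f7 _ _ hm hm0
          obtain ⟨l', hl'⟩ := Int.eq_ofNat_of_zero_le (show 0 ≤ -l by omega)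
          refine E.neg u hu l' (by omega) ?_
          convert h3 using 1
          rw [show l = -(l' : ℤ) by omega]
          module
        rw [this, mul_zero]; exact zero_mem _
      · obtain ⟨l, rfl⟩ := Int.eq_ofNat_of_zero_le (show 0 ≤ l by omega)
        by_cases hlk : l < k
        · have h3 := hl l hlk
          obtain ⟨s, hs⟩ := Int.eq_ofNat_of_zero_le
            (Int.emod_nonneg ((u : ℤ) - l * q) (show (p : ℤ) ≠ 0 by omega))
          have hsp : s < p := by
            have := Int.emod_lt_of_pos ((u : ℤ) - l * q) hp0
            omega
          rw [hs] at h3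
          have h4 : u ≤ t + s := by exact_mod_cast h3
          have key : ∀ i : ℕ, i ≤ s → ∃ m' ∈ G (u • e + (l : ℤ) • x - i • e), m = X ^ i * m' := by
            intro i
            induction i with
            | zero => intro _; exact ⟨m, by simpa using hm, by simp⟩
            | succ i ih =>
              intro hi
              obtain ⟨m', hm', rfl⟩ := ih (by omega)
              have h5 : ε m' = 0 := by
                by_contra h0
                have h6 := E.resH _ (D.f5 _ _ hm' h0)
                rw [map_sub, map_add, map_nsmul, map_nsmul, map_zsmul, E.rese, E.resx] at h6
                simp only [nsmul_eq_mul, zsmul_eq_mul, mul_one] at h6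
                have h7 := E.res_eq_mod ((u : ℤ) - l * q) i (by omega) (by
                  push_cast at h6 ⊢
                  linear_combination h6)
                rw [hs] at h7
                have h8 : s = i := by exact_mod_cast h7
                omega
              obtain ⟨m'', hm'', rfl⟩ := D.k1h hm' h5
              exact ⟨m'', by rwa [succ_nsmul, ← sub_sub], by ring⟩
          obtain ⟨m', hm', rfl⟩ := key s le_rfl
          obtain ⟨r', hr'⟩ : ∃ r', n1 + t + s = n + r' := ⟨n1 + t + s - n, by omega⟩
          have : X ^ (n1 + t) * α * (X ^ s * m') = X ^ n * (X ^ r' * α * m') := by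
            have h9 : X ^ (n1 + t) * X ^ s = X ^ n * X ^ r' := by
              rw [← pow_add, ← pow_add, hr']
            linear_combination (α * m') * h9
          rw [this]
          exact JJ_f _
        · obtain ⟨l', rfl⟩ : ∃ l', l = k + l' := ⟨l - k, by omega⟩
          have hz0 : α * m ∈ G (n • e + (l' • x + (r + 1) • e)) := by
            have := D.mul hα hm
            convert this using 2
            rw [hr]
            push_cast
            module
          have key : ∀ i : ℕ, i ≤ r + 1 → ∃ z ∈ G (n • e + (l' • x + (r + 1) • e) - i • e), ∃ γ,
              α * m = X ^ i * z + g * γ := by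
            intro i
            induction i with
            | zero => intro _; exact ⟨α * m, by simpa using hz0, 0, by simp⟩
            | succ i ih =>
              intro hi
              obtain ⟨z, hz, γ, hγ⟩ := ih (by omega)
              obtain ⟨z', hz', γ', hγ'⟩ := red_step D hz hg hge (by
                intro h0
                have h3 := E.resH _ (D.f5 _ _ hz h0)
                obtain ⟨i', hi'⟩ : ∃ i', r + 1 = i + i' := ⟨r + 1 - i, by omega⟩
                have h4 : n • e + (l' • x + (r + 1) • e) - i • e - n • e
                    = l' • x + i' • e := by
                  rw [hi']; module
                rw [h4]
                apply E.zero_res (add_mem (nsmul_mem E.xLp _) (nsmul_mem E.eLp _))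
                rw [← h4, map_sub, h3, hresn, sub_zero])
              refine ⟨z', by rwa [succ_nsmul e i, ← sub_sub], γ + X ^ i * γ', ?_⟩
              rw [hγ, hγ']; ring
          obtain ⟨z, hz, γ, hγ⟩ := key (r + 1) le_rfl
          have : X ^ (n1 + t) * α * m = X ^ n * z + g * (X ^ (n1 + t) * γ) := by
            rw [hfx, mul_assoc, hγ]; ring
          rw [this]
          exact add_mem (JJ_f _) (JJ_g _)
    · intro a b ha hb
      rw [mul_add]; exact add_mem ha hb
  · intro hJ
    obtain ⟨a, ha, β, hβ, h3⟩ := D.idl_hom hf hg hh (mem_JJ.1 hJ)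
    rw [hfx] at h3
    obtain ⟨β', hβ', rfl⟩ := D.strip (γ := α - X ^ (r + 1) * a) (n1 + t) hβ hge (by
      linear_combination -h3)
    have h4 : α = X ^ (r + 1) * a + g * β' := by
      apply D.cancel_pow (n1 + t)
      linear_combination h3
    have h5 : ε β' ≠ 0 := by
      intro h0
      apply hαe
      rw [h4, map_add, map_mul, map_mul, map_pow, D.eX, h0]
      simp
    have h6 := add_mem (E.HLp (D.f5 _ _ hβ' h5)) (nsmul_mem E.eLp t)
    refine E.neg 0 (by omega) k hk1 ?_
    convert h6 using 1
    rw [hn1] at hK ⊢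
    linear_combination (norm := module) (2 : ℤ) • hK

lemma exists_AB (D : GD G X e ε H Lp) (E : LD p q x e H Lp res) (u : ℕ) :
    ∃ l N1 : ℕ, ∀ N, N1 ≤ N → ∃ A ∈ G (u • e + l • x),
      ∃ B ∈ G ((p * N) • e - (u • e + l • x)), ε A ≠ 0 ∧ ε B ≠ 0 := by
  have hp0 : NeZero p := ⟨by have := E.hp; omega⟩
  let l := ((u : ZMod p) * (q : ZMod p)⁻¹).val
  have hl : (l : ZMod p) = (u : ZMod p) * (q : ZMod p)⁻¹ := ZMod.natCast_zmod_val _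
  have hz : u • e + l • x ∈ Lp := add_mem (nsmul_mem E.eLp _) (nsmul_mem E.xLp _)
  have hr : res (u • e + l • x) = 0 := by
    rw [map_add, map_nsmul, map_nsmul, E.rese, E.resx]
    simp only [nsmul_eq_mul, mul_one]
    rw [hl]
    have := ZMod.coe_mul_inv_eq_one q E.cop
    linear_combination (-(u : ZMod p)) * this
  obtain ⟨N1, hN1⟩ := E.big _ hz
  refine ⟨l, N1, fun N hN => ?_⟩
  obtain ⟨A, hA, hA0⟩ := D.f6 _ (E.zero_res hz hr)
  obtain ⟨B, hB, hB0⟩ := D.f6 _ (E.zero_res (hN1 N hN) (by rw [map_sub, E.res_n, hr, sub_zero]))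
  exact ⟨A, hA, B, hB, hA0, hB0⟩

lemma kdata (D : GD G X e ε H Lp) (u : ℕ) (n n1 K l : ℕ) (hn1 : n = u + n1)
    (hK : n • e = K • x) {A B : S} (hA : A ∈ G (u • e + l • x))
    (hB : B ∈ G (n • e - (u • e + l • x))) (hA0 : ε A ≠ 0) (hB0 : ε B ≠ 0)
    (R : Subalgebra ℂ S) (hR : ∀ s, s ∈ R ↔ s ∈ GD.T G 0 x)
    (M : Submodule R S) (hM : ∀ s, s ∈ M ↔ s ∈ GD.T G (u • e) x) :
    KData S R M (GD.T G (-(u • e)) x : Set S) (X ^ n) (A * B) (X ^ u) (X ^ n1) A B := by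
  have hf : X ^ n ∈ G ((K : ℤ) • x) := by
    have := D.pow_mem n
    rwa [hK, ← natCast_zsmul] at this
  have hg0 : A * B ∈ G (n • e) := by
    have := D.mul hA hB
    rwa [add_sub_cancel] at this
  have hg : A * B ∈ G ((K : ℤ) • x) := by
    rwa [hK, ← natCast_zsmul] at hg0
  have hnz : ∀ s, X ^ n * s = 0 → s = 0 := fun s hs => D.nzd_pow n hs
  refine ⟨?_, ?_, ?_, ?_, ?_, rfl, ?_, ?_, hnz, ?_, ?_, ?_, ?_, ?_⟩
  · rw [hM]
    refine GD.mem_T 0 ?_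
    simpa using D.pow_mem u
  · rw [hM]
    refine GD.mem_T l ?_
    rwa [natCast_zsmul]
  · refine GD.mem_T K ?_
    have := D.pow_mem n1
    convert this using 2
    rw [hn1] at hK
    linear_combination (norm := module) (-1 : ℤ) • hK
  · refine GD.mem_T (K - l) ?_
    convert hB using 2
    linear_combination (norm := module) (-1 : ℤ) • hK
  · rw [hn1, pow_add]
  · intro m hm b hb
    rw [hR]
    have := D.T_mul hb ((hM m).1 hm)
    rwa [neg_add_cancel] at this
  · intro r hr b hb
    have := D.T_mul ((hR r).1 hr) hb
    rwa [zero_add] at this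
  · intro s t hst
    exact D.reg n hg0 (by rw [map_mul]; exact mul_ne_zero hA0 hB0) hst
  · intro s hs
    rw [hR] at hs ⊢
    exact D.T_sat 0 x K hf hnz s hs
  · intro s hs
    exact D.T_sat _ x K hf hnz s hs
  · intro s hs h
    rw [hR] at hs
    simp only [hR]
    exact D.T_idl 0 x K hf hg s hs h
  · intro s hs h
    exact D.T_idl _ x K hf hg s hs h

theorem main_abs (D : GD G X e ε H Lp) (E : LD p q x e H Lp res) (u : ℕ) (hu : u ≤ p)
    (R : Subalgebra ℂ S) (hR : ∀ s, s ∈ R ↔ s ∈ GD.T G 0 x)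
    (M : Submodule R S) (hM : ∀ s, s ∈ M ↔ s ∈ GD.T G (u • e) x) :
    ExtSplits R M R ↔ Spec p q u := by
  obtain ⟨l, N1, hAB⟩ := exists_AB D E u
  obtain ⟨K, N0, hN0, hper⟩ := E.per
  have hdata : ∀ N2 : ℕ, ∃ N n n1 K' : ℕ, N2 ≤ N ∧ n = p * N ∧ n = u + n1 ∧ n • e = K' • x ∧
      ∃ A B : S, A * B ∈ G (n • e) ∧ ε (A * B) ≠ 0 ∧
        KData S R M (GD.T G (-(u • e)) x : Set S) (X ^ n) (A * B) (X ^ u) (X ^ n1) A B := by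
    intro N2
    obtain ⟨N, hN⟩ : ∃ N, N = (N1 + N2 + 1) * N0 := ⟨_, rfl⟩
    have hle : N1 + N2 + 1 ≤ N := by rw [hN]; exact Nat.le_mul_of_pos_right _ hN0
    have hnu : u ≤ p * N := hu.trans (Nat.le_mul_of_pos_right _ (by omega))
    obtain ⟨n1, hn1⟩ := Nat.exists_eq_add_of_le hnu
    have hK : (p * N) • e = ((N1 + N2 + 1) * K) • x := by
      rw [hN, show p * ((N1 + N2 + 1) * N0) = (N1 + N2 + 1) * (p * N0) by ring, mul_smul, hper,
        mul_smul]
    obtain ⟨A, hA, B, hB, hA0, hB0⟩ := hAB N (by omega)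
    refine ⟨N, p * N, n1, _, by omega, rfl, hn1, hK, A, B, ?_, ?_,
      kdata D u _ n1 _ l hn1 hK hA hB hA0 hB0 R hR M hM⟩
    · have := D.mul hA hB
      rwa [add_sub_cancel] at this
    · rw [map_mul]; exact mul_ne_zero hA0 hB0
  constructor
  · intro hsp
    by_contra hns
    obtain ⟨N2, hN2⟩ := thmB D E u hu hns
    obtain ⟨N, n, n1, K', hN, hn, hn1, hK, A, B, hg, hge, KD⟩ := hdata N2
    obtain ⟨h, hh, h1, h2⟩ := hN2 N n n1 K' hN hn hn1 hK _ hg hge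
    apply h2
    rw [mem_JJ]
    exact KD.of_splits hsp h hh fun m hm => mem_JJ.1 (h1 m ((hM m).1 hm))
  · intro hs
    obtain ⟨N, n, n1, K', hN, hn, hn1, hK, A, B, hg, hge, KD⟩ := hdata 0
    refine KD.splits_of fun h hh hm => ?_
    rw [← mem_JJ]
    exact thmA D E u hu hs N n n1 K' hn hn1 hK hg hge h hh fun m h' =>
      mem_JJ.2 (hm m ((hM m).2 h'))

end Main2

section Final

variable {ι : Type} [Fintype ι] [DecidableEq ι] {p : ι → ℕ}

lemma exists_LD (hp : ∀ i, 2 ≤ p i) (x : LGroup ι p) (hxp : x ∈ Lplus p)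
    (hxint : ¬ (x ∈ Lplus p ∧ cgen p - x ∈ Lplus p))
    (a : ι → ℕ) (ha : ∀ i, a i < p i) (aZ : ℤ)
    (hxnf : x = (∑ i, a i • egen p i) + aZ • cgen p)
    (hgcd : ∀ i, Nat.gcd (p i) (a i) = 1) (j : ι) :
    LD (p j) (p j - a j) x (egen p j) (Hj p j) (Lplus p) (lRes p j) := by
  have hmul : ∀ N : ℕ, (p j * N) • egen p j = N • cgen p := by
    intro N
    rw [mul_comm, mul_smul, p_smul_egen]
  refine ⟨hp j, lRes_Hj j, Hj_le j, egen_mem j, lRes_egen_self j, sub_mem_Hj j, ?_, hxp, ?_, ?_,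
    ?_, ?_⟩
  · intro z hz
    simp only [hmul]
    exact exists_nc_sub j hp z hz
  · intro u' hu' m hm h
    obtain ⟨r, hr⟩ := Nat.exists_eq_add_of_le hu'
    obtain ⟨m', rfl⟩ := Nat.exists_eq_add_of_le hm
    apply hxint
    refine ⟨hxp, ?_⟩
    have h1 := add_mem (add_mem h (nsmul_mem (egen_mem j) r)) (nsmul_mem hxp m')
    convert h1 using 1
    rw [← p_smul_egen j, hr]
    module
  · obtain ⟨N, hN⟩ := exists_prod_smul x hxp
    refine ⟨∏ i, p i, N, ?_, by rw [hmul, hN]⟩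
    by_contra h0
    have hN0 : N = 0 := by omega
    rw [hN0, zero_smul] at hN
    have hpos : 0 < ∏ i, p i := Finset.prod_pos fun i _ => by have := hp i; omega
    obtain ⟨m, hm⟩ := Nat.exists_eq_add_of_lt hpos
    apply hxint
    refine ⟨hxp, ?_⟩
    have h1 := add_mem (cgen_mem (p := p) j) (nsmul_mem hxp m)
    convert h1 using 1
    rw [hm] at hN
    linear_combination (norm := module) (-1 : ℤ) • hN
  · rw [hxnf, map_add, map_zsmul, lRes_cgen, smul_zero, add_zero, map_sum,
      Finset.sum_eq_single j]
    · rw [map_nsmul, lRes_egen_self, Nat.cast_sub (ha j).le]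
      simp
    · intro b _ hb
      rw [map_nsmul, lRes_egen_ne b j hb, smul_zero]
    · simp
  · have h1 := hgcd j
    have h2 := ha j
    obtain ⟨r, hr⟩ := Nat.exists_eq_add_of_le h2.le
    rw [hr] at h1 ⊢
    rw [Nat.add_sub_cancel_left]
    rw [Nat.Coprime, Nat.gcd_comm]
    simpa [Nat.gcd_comm] using h1

end Final

open CategoryTheory in
/-- The rank one special CM modules over `R = S^x`:
for `0 ≤ u ≤ p_j`, `Ext¹_R(S(u e_j)^x, R) = 0` iff `u ∈ I(p_j, p_j − a_j)`. -/
theorem special_rank_one_iff_iSeries (n : ℕ) (hn : 1 ≤ n) (p : Fin n → ℕ)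
    (hp : ∀ i, 2 ≤ p i)
    (c0 c1 : Fin n → ℂ) (hnz : ∀ i, (c0 i, c1 i) ≠ (0, 0))
    (hdist : ∀ i j : Fin n, i ≠ j → c0 i * c1 j ≠ c1 i * c0 j)
    (x : LGroup (Fin n) p) (hxp : x ∈ Lplus p)
    (hxint : ¬ (x ∈ Lplus p ∧ cgen p - x ∈ Lplus p))
    (a : Fin n → ℕ) (ha : ∀ i, a i < p i) (aZ : ℤ)
    (hxnf : x = (∑ i, a i • egen p i) + aZ • cgen p)
    (hgcd : ∀ i, Nat.gcd (p i) (a i) = 1)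
    (R : Subalgebra ℂ (SAlg (Fin n) p c0 c1))
    (hR : Subalgebra.toSubmodule R = SVerA p c0 c1 x) :
    ∀ (j : Fin n) (u : ℕ), u ≤ p j →
      ∀ (M : Submodule ↥R (SAlg (Fin n) p c0 c1)),
        (M : Set (SAlg (Fin n) p c0 c1)) = ↑(SShiftA p c0 c1 (u • egen p j) x) →
        (Subsingleton (((Ext ↥R (ModuleCat ↥R) 1).obj
            (Opposite.op (ModuleCat.of ↥R ↥M))).obj (ModuleCat.of ↥R ↥R)) ↔
          u ∈ ISet (p j) (p j - a j)) := by
  intro j u hu M hM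
  obtain ⟨ε, D⟩ := exists_GD (p := p) (c0 := c0) (c1 := c1) hp hnz hdist j
  have E := exists_LD hp x hxp hxint a ha aZ hxnf hgcd j
  have ha1 : 1 ≤ a j := by
    by_contra h
    have h0 : a j = 0 := by omega
    have h1 := hgcd j
    have h2 := hp j
    rw [h0, Nat.gcd_zero_right] at h1
    omega
  have hpj := hp j
  rw [ext1_iff_splits, ← spec_iff (p j) (p j - a j) u (by omega) hu]
  refine main_abs D E u hu R ?_ M ?_
  · intro s
    rw [← Subalgebra.mem_toSubmodule, hR, SVerA, GD.T]
    simp only [zero_add]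
  · intro s
    rw [← SetLike.mem_coe, hM]
    rfl
end
end

section
/- (1) The Veronese subring S^s equals the ℂ-subalgebra of S generated by the elements 𝗏 and 𝗎_1,…,𝗎_n. (2) The quotient ℂ-vector space S^s/𝗏S^s is spanned by the images of the powers 𝗎_i^ℓ for 1 ≤ i ≤ n and ℓ ≥ 0. -/
set_option synthInstance.maxHeartbeats 1000000
set_option maxHeartbeats 1000000

noncomputable section

open MvPolynomial

abbrev BPoly (n : ℕ) : Type := MvPolynomial (Fin n) ℂ

/-- The defining ideal `(xᵢ^{pᵢ} + x₁^{p₁} − λᵢx₂^{p₂} : 3 ≤ i ≤ n)` (0-indexed). -/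
def BIdl (n : ℕ) [NeZero n] (p : Fin n → ℕ) (lam : Fin n → ℂ) : Ideal (BPoly n) :=
  Ideal.span { f | ∃ i : Fin n, 2 ≤ (i : ℕ) ∧
    f = X i ^ p i + X 0 ^ p 0 - C (lam i) * X 1 ^ p 1 }

abbrev BAlg (n : ℕ) [NeZero n] (p : Fin n → ℕ) (lam : Fin n → ℂ) : Type :=
  BPoly n ⧸ BIdl n p lam

/-- The `L`-weight of an exponent vector, `deg xᵢ := eᵢ`. -/
def wtB {n : ℕ} (p : Fin n → ℕ) (m : Fin n →₀ ℕ) : LGroup (Fin n) p :=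
  ∑ i : Fin n, m i • egen p i

def polyCompB {n : ℕ} (p : Fin n → ℕ) (y : LGroup (Fin n) p) :
    Submodule ℂ (BPoly n) where
  carrier := { f | ∀ m, coeff m f ≠ 0 → wtB p m = y }
  add_mem' := by
    intro f g hf hg m hm
    by_cases h : coeff m f = 0
    · refine hg m fun h' => hm ?_
      simp [coeff_add, h, h']
    · exact hf m h
  zero_mem' := by
    intro m hm
    simp at hm
  smul_mem' := by
    intro c f hf m hm
    refine hf m fun h => hm ?_
    simp [coeff_smul, h]

/-- The homogeneous component `S_y ⊆ S` of the `L`-graded algebra `S`. -/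
def SCompB (n : ℕ) [NeZero n] (p : Fin n → ℕ) (lam : Fin n → ℂ) (y : LGroup (Fin n) p) :
    Submodule ℂ (BAlg n p lam) :=
  (polyCompB p y).map (Ideal.Quotient.mkₐ ℂ (BIdl n p lam)).toLinearMap

/-- The Veronese subring `S^x = ⊕_{k ∈ ℤ} S_{kx}`, as a subspace of `S`. -/
def SVerB (n : ℕ) [NeZero n] (p : Fin n → ℕ) (lam : Fin n → ℂ) (x : LGroup (Fin n) p) :
    Submodule ℂ (BAlg n p lam) :=
  ⨆ k : ℤ, SCompB n p lam (k • x)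

/-- `S(y)^x = ⊕_{k ∈ ℤ} S_{y + kx}`, as a subspace of `S`. -/
def SShiftB (n : ℕ) [NeZero n] (p : Fin n → ℕ) (lam : Fin n → ℂ)
    (y x : LGroup (Fin n) p) : Submodule ℂ (BAlg n p lam) :=
  ⨆ k : ℤ, SCompB n p lam (y + k • x)

/-- The polynomials `𝗎₁, …, 𝗎ₙ` (0-indexed). -/
def uPoly (n : ℕ) [NeZero n] (p : Fin n → ℕ) (i : Fin n) : BPoly n :=
  if (i : ℕ) = 0 then
    X 0 ^ (p 0 + p 1) * ∏ j ∈ Finset.univ.filter (fun j : Fin n => 2 ≤ (j : ℕ)), X j ^ p 1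
  else if (i : ℕ) = 1 then
    X 1 ^ (p 0 + p 1) * ∏ j ∈ Finset.univ.filter (fun j : Fin n => 2 ≤ (j : ℕ)), X j ^ p 0
  else
    -(X 0 ^ p i * X 1 ^ (p 1 + p i) *
      ∏ j ∈ Finset.univ.filter (fun j : Fin n => 2 ≤ (j : ℕ) ∧ j ≠ i), X j ^ p i)

/-- The elements `𝗎ᵢ ∈ S`. -/
def uElem (n : ℕ) [NeZero n] (p : Fin n → ℕ) (lam : Fin n → ℂ) (i : Fin n) :
    BAlg n p lam :=
  Ideal.Quotient.mk (BIdl n p lam) (uPoly n p i)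

/-- The element `𝗏 = x₁x₂⋯xₙ ∈ S`. -/
def vElem (n : ℕ) [NeZero n] (p : Fin n → ℕ) (lam : Fin n → ℂ) : BAlg n p lam :=
  Ideal.Quotient.mk (BIdl n p lam) (∏ i : Fin n, X i)

section VeroneseProof

/-- The image of the monomial with exponent vector `m`. -/
def monS (n : ℕ) [NeZero n] (p : Fin n → ℕ) (lam : Fin n → ℂ) (m : Fin n → ℕ) : BAlg n p lam :=
  ∏ i : Fin n, (Ideal.Quotient.mk (BIdl n p lam) (X i)) ^ m i

/-- Exponent vectors of weight `k • s`. -/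
def Gd {n : ℕ} (p : Fin n → ℕ) (k : ℤ) (m : Fin n → ℕ) : Prop :=
  ∃ b : Fin n → ℤ, ∑ i, b i = 0 ∧ ∀ i, (m i : ℤ) = k + p i * b i

lemma monS_add (n : ℕ) [NeZero n] (p : Fin n → ℕ) (lam : Fin n → ℂ) (a b : Fin n → ℕ) :
    monS n p lam (a + b) = monS n p lam a * monS n p lam b := by
  simp [monS, pow_add, Finset.prod_mul_distrib]

lemma monS_single (n : ℕ) [NeZero n] (p : Fin n → ℕ) (lam : Fin n → ℂ) (i : Fin n) (q : ℕ) :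
    monS n p lam (Pi.single i q) = (Ideal.Quotient.mk (BIdl n p lam) (X i)) ^ q := by
  rw [monS, Finset.prod_eq_single i]
  · simp
  · intro j _ hj
    simp [Pi.single_eq_of_ne hj]
  · simp

lemma monS_pow (n : ℕ) [NeZero n] (p : Fin n → ℕ) (lam : Fin n → ℂ) (a : Fin n → ℕ) (l : ℕ) :
    monS n p lam a ^ l = monS n p lam (l • a) := by
  simp [monS, ← Finset.prod_pow, ← pow_mul, mul_comm]

lemma mk_monomial (n : ℕ) [NeZero n] (p : Fin n → ℕ) (lam : Fin n → ℂ) (m : Fin n →₀ ℕ) :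
    Ideal.Quotient.mk (BIdl n p lam) (monomial m 1) = monS n p lam m := by
  rw [monomial_eq, Finsupp.prod_fintype _ _ (by simp)]
  simp [monS]

lemma vElem_eq (n : ℕ) [NeZero n] (p : Fin n → ℕ) (lam : Fin n → ℂ) :
    vElem n p lam = monS n p lam 1 := by
  simp [monS, vElem]

lemma LRel_mem {n : ℕ} (p : Fin n → ℕ) (v : Option (Fin n) → ℤ) :
    v ∈ LRel (Fin n) p ↔ ∃ b : Fin n → ℤ, (∀ i, v (some i) = p i * b i) ∧
      v none = - ∑ i, b i := by
  constructor
  · intro h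
    induction h using AddSubgroup.closure_induction with
    | mem x hx =>
      obtain ⟨i, rfl⟩ := hx
      refine ⟨Pi.single i 1, fun j => ?_, ?_⟩
      · by_cases h : j = i
        · subst h; simp
        · simp [Pi.single_apply, h]
      · simp
    | zero => exact ⟨0, by simp, by simp⟩
    | add x y _ _ hx hy =>
      obtain ⟨a, ha, ha'⟩ := hx
      obtain ⟨b, hb, hb'⟩ := hy
      refine ⟨a + b, fun i => ?_, ?_⟩
      · simp [ha, hb, mul_add]
      · simp [ha', hb', Finset.sum_add_distrib]; ring
    | neg x _ hx =>
      obtain ⟨a, ha, ha'⟩ := hx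
      refine ⟨-a, fun i => ?_, ?_⟩
      · simp [ha]
      · simp [ha']
  · rintro ⟨b, hb, hb'⟩
    have : v = ∑ i, b i • ((p i : ℤ) • Pi.single (some i) 1 -
        Pi.single (none : Option (Fin n)) (1 : ℤ)) := by
      funext o
      rcases o with _ | i
      · simp [hb']
      · simp [hb, Pi.single_apply, mul_comm]
    rw [this]
    refine AddSubgroup.sum_mem _ fun i _ => AddSubgroup.zsmul_mem _ ?_ _
    exact AddSubgroup.subset_closure ⟨i, rfl⟩

lemma wt_iff {n : ℕ} (p : Fin n → ℕ) (m : Fin n →₀ ℕ) (k : ℤ) :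
    wtB p m = k • (∑ i, egen p i) ↔ Gd p k m := by
  have h1 : wtB p m - k • (∑ i, egen p i) =
      ((∑ i : Fin n, ((m i : ℤ) - k) • Pi.single (some i) 1 : Option (Fin n) → ℤ) :
        LGroup (Fin n) p) := by
    rw [wtB, ← Finset.sum_zsmul, ← Finset.sum_sub_distrib]
    have : ∀ f : Fin n → (Option (Fin n) → ℤ), ((∑ i, f i : Option (Fin n) → ℤ) :
        LGroup (Fin n) p) = ∑ i, ((f i : Option (Fin n) → ℤ) : LGroup (Fin n) p) := fun f =>
      map_sum (QuotientAddGroup.mk' (LRel (Fin n) p)) f _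
    rw [this]
    refine Finset.sum_congr rfl fun i _ => ?_
    rw [sub_zsmul]
    simp only [egen, QuotientAddGroup.mk_add, QuotientAddGroup.mk_neg, QuotientAddGroup.mk_zsmul, natCast_zsmul]
    simp [sub_eq_add_neg]
  rw [← sub_eq_zero, h1, QuotientAddGroup.eq_zero_iff, LRel_mem]
  constructor
  · rintro ⟨b, hb, hb'⟩
    refine ⟨b, ?_, fun i => ?_⟩
    · simpa using hb'
    · have := hb i
      simp [Pi.single_apply] at this
      linarith
  · rintro ⟨b, hb, hb'⟩
    refine ⟨b, fun i => ?_, ?_⟩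
    · have := hb' i
      simp [Pi.single_apply]
      linarith
    · simpa using hb

lemma SVer_eq (n : ℕ) [NeZero n] (p : Fin n → ℕ) (lam : Fin n → ℂ) :
    SVerB n p lam (∑ i, egen p i) =
      Submodule.span ℂ { w | ∃ (k : ℤ) (m : Fin n → ℕ), Gd p k m ∧ w = monS n p lam m } := by
  apply le_antisymm
  · refine iSup_le fun k => ?_
    rintro _ ⟨f, hf, rfl⟩
    rw [f.as_sum, map_sum]
    refine Submodule.sum_mem _ fun m hm => ?_
    have hm' := hf m (by simpa using hm)
    rw [wt_iff] at hm'
    have : (monomial m (coeff m f) : BPoly n) = coeff m f • monomial m 1 := by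
      rw [smul_monomial]; simp
    rw [this, map_smul]
    refine Submodule.smul_mem _ _ (Submodule.subset_span ⟨k, m, hm', ?_⟩)
    exact mk_monomial n p lam m
  · rw [Submodule.span_le]
    rintro _ ⟨k, m, hm, rfl⟩
    refine Submodule.mem_iSup_of_mem k ?_
    refine ⟨monomial (Finsupp.equivFunOnFinite.symm m) 1, ?_, ?_⟩
    · intro m' hm'
      rw [coeff_monomial] at hm'
      have : Finsupp.equivFunOnFinite.symm m = m' := by
        by_contra h; simp [h] at hm'
      subst this
      rw [wt_iff]
      simpa using hm
    · exact (mk_monomial n p lam _).trans (by simp)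

lemma T_rel (n : ℕ) (hn : 3 ≤ n) [NeZero n] (p : Fin n → ℕ) (lam : Fin n → ℂ)
    (hlam0 : ∀ i : Fin n, 2 ≤ (i : ℕ) → lam i ≠ 0)
    (hlamd : ∀ i j : Fin n, 2 ≤ (i : ℕ) → 2 ≤ (j : ℕ) → i ≠ j → lam i ≠ lam j)
    (i i' j : Fin n) (hij : i' ≠ j) :
    ∃ α β : ℂ, monS n p lam (Pi.single i (p i)) =
      α • monS n p lam (Pi.single i' (p i')) + β • monS n p lam (Pi.single j (p j)) := by
  set T : Fin n → BAlg n p lam := fun i => monS n p lam (Pi.single i (p i)) with hT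
  have h0v : ((0 : Fin n) : ℕ) = 0 := by simp
  have h1v : ((1 : Fin n) : ℕ) = 1 := by
    obtain ⟨r, rfl⟩ : ∃ r, n = r + 3 := ⟨n - 3, by omega⟩
    simp [Fin.val_one']
  let a : Fin n → ℂ := fun i => if (i : ℕ) = 0 then 1 else if (i : ℕ) = 1 then 0 else -1
  let c : Fin n → ℂ := fun i => if (i : ℕ) = 0 then 0 else if (i : ℕ) = 1 then 1 else lam i
  have hTi : ∀ i, T i = a i • T 0 + c i • T 1 := by
    intro i
    by_cases h0 : (i : ℕ) = 0
    · have : i = 0 := Fin.ext (by omega)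
      subst this; simp [a, c]
    by_cases h1 : (i : ℕ) = 1
    · have : i = 1 := Fin.ext (by omega)
      subst this; simp only [a, c, h1v, h0v]; simp
    have hmem : (X i ^ p i + X 0 ^ p 0 - C (lam i) * X 1 ^ p 1 : BPoly n) ∈ BIdl n p lam :=
      Ideal.subset_span ⟨i, by omega, rfl⟩
    have hz := Ideal.Quotient.eq_zero_iff_mem.mpr hmem
    simp only [map_sub, map_add, map_mul, map_pow] at hz
    have hC : Ideal.Quotient.mk (BIdl n p lam) (C (lam i)) = algebraMap ℂ (BAlg n p lam) (lam i) :=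
      rfl
    rw [hC, ← Algebra.smul_def] at hz
    simp only [hT, monS_single, a, c, h0, h1, if_false, neg_smul, one_smul]
    linear_combination hz
  have hD : a i' * c j - a j * c i' ≠ 0 := by
    have hv : (i' : ℕ) ≠ j := fun h => hij (Fin.ext h)
    have hl := hlam0 i'
    have hl' := hlam0 j
    have hd := hlamd i' j
    simp only [a, c]
    split_ifs <;> first | omega | skip
    all_goals simp
    · exact hl' (by omega)
    · exact hl (by omega)
    · intro h
      exact hd (by omega) (by omega) hij (by linear_combination h)
  refine ⟨(a i * c j - a j * c i) / (a i' * c j - a j * c i'),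
    (a i' * c i - a i * c i') / (a i' * c j - a j * c i'), ?_⟩
  change T i = _ • T i' + _ • T j
  rw [hTi i, hTi i', hTi j]
  simp only [smul_add, smul_smul]
  rw [add_add_add_comm, ← add_smul, ← add_smul]
  clear_value a c
  have e1 : ∀ z x y : ℂ, z * (a i' * c j - a j * c i') = x → y = x / (a i' * c j - a j * c i') →
      z = y := by
    intro z x y h1 h2
    rw [h2, eq_div_iff hD, h1]
  congr 2
  · exact e1 _ _ _ rfl (by ring)
  · exact e1 _ _ _ rfl (by ring)

/-- The exponent vector of the generator not involving `x_j`. -/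
def eVec {n : ℕ} (p : Fin n → ℕ) (j t : Fin n) : Fin n → ℕ :=
  fun i => if i = j then 0 else if i = t then p i + p j else p j

lemma val_zero_one (n : ℕ) (hn : 3 ≤ n) [NeZero n] :
    ((0 : Fin n) : ℕ) = 0 ∧ ((1 : Fin n) : ℕ) = 1 := by
  obtain ⟨r, rfl⟩ : ∃ r, n = r + 3 := ⟨n - 3, by omega⟩
  simp

lemma prod_split (n : ℕ) (hn : 3 ≤ n) [NeZero n] {R : Type*} [CommRing R] (f : Fin n → R) :
    ∏ i, f i = f 0 * f 1 * ∏ j ∈ Finset.univ.filter (fun j : Fin n => 2 ≤ (j : ℕ)), f j := by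
  obtain ⟨h0, h1⟩ := val_zero_one n hn
  have h01 : (0 : Fin n) ≠ 1 := fun h => by rw [h] at h0; omega
  rw [← Finset.prod_filter_mul_prod_filter_not Finset.univ (fun j : Fin n => 2 ≤ (j : ℕ)),
    mul_comm]
  congr 1
  have : Finset.univ.filter (fun j : Fin n => ¬ 2 ≤ (j : ℕ)) = {0, 1} := by
    ext j
    simp only [Finset.mem_filter, Finset.mem_univ, true_and, Finset.mem_insert,
      Finset.mem_singleton, Fin.ext_iff, h0, h1]
    omega
  rw [this, Finset.prod_pair h01]

lemma u_zero (n : ℕ) (hn : 3 ≤ n) [NeZero n] (p : Fin n → ℕ) (lam : Fin n → ℂ) :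
    uElem n p lam 0 = (1 : ℂ) • monS n p lam (eVec p 1 0) := by
  obtain ⟨h0, h1⟩ := val_zero_one n hn
  have h01 : (0 : Fin n) ≠ 1 := fun h => by rw [h] at h0; omega
  rw [uElem, uPoly, if_pos h0, one_smul, monS, prod_split n hn]
  simp only [map_mul, map_prod, map_pow, eVec, h01, if_true, if_false, pow_zero, mul_one]
  congr 1
  refine Finset.prod_congr rfl fun j hj => ?_
  have hj : 2 ≤ (j : ℕ) := by simpa using hj
  have hj0 : j ≠ 0 := by rintro rfl; omega
  have hj1 : j ≠ 1 := by rintro rfl; omega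
  simp only [hj0, hj1, if_false]

lemma u_one (n : ℕ) (hn : 3 ≤ n) [NeZero n] (p : Fin n → ℕ) (lam : Fin n → ℂ) :
    uElem n p lam 1 = (1 : ℂ) • monS n p lam (eVec p 0 1) := by
  obtain ⟨h0, h1⟩ := val_zero_one n hn
  have h01 : (1 : Fin n) ≠ 0 := fun h => by rw [h] at h1; omega
  rw [uElem, uPoly, if_neg (by omega), if_pos h1, one_smul, monS, prod_split n hn]
  simp only [map_mul, map_prod, map_pow, eVec, h01, if_true, if_false, pow_zero, one_mul,
    add_comm (p 1)]
  congr 1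
  refine Finset.prod_congr rfl fun j hj => ?_
  have hj : 2 ≤ (j : ℕ) := by simpa using hj
  have hj0 : j ≠ 0 := by rintro rfl; omega
  have hj1 : j ≠ 1 := by rintro rfl; omega
  simp only [hj0, hj1, if_false]

lemma u_two (n : ℕ) (hn : 3 ≤ n) [NeZero n] (p : Fin n → ℕ) (lam : Fin n → ℂ) (i : Fin n)
    (hi : 2 ≤ (i : ℕ)) :
    uElem n p lam i = (-1 : ℂ) • monS n p lam (eVec p i 1) := by
  obtain ⟨h0, h1⟩ := val_zero_one n hn
  have h01 : (0 : Fin n) ≠ 1 := fun h => by rw [h] at h0; omega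
  have h0i : 0 ≠ i := by rintro rfl; omega
  have h1i : 1 ≠ i := by rintro rfl; omega
  rw [uElem, uPoly, if_neg (by omega), if_neg (by omega), neg_one_smul, monS, prod_split n hn]
  simp only [map_neg, map_mul, map_prod, map_pow, eVec, h01, h0i, h1i, if_true, if_false]
  congr 2
  have hsub : Finset.univ.filter (fun j : Fin n => 2 ≤ (j : ℕ) ∧ j ≠ i) ⊆
      Finset.univ.filter (fun j : Fin n => 2 ≤ (j : ℕ)) := by
    intro j; simp +contextual
  rw [← Finset.prod_subset hsub]
  · refine Finset.prod_congr rfl fun j hj => ?_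
    have hj : 2 ≤ (j : ℕ) ∧ j ≠ i := by simpa using hj
    have hj1 : j ≠ 1 := by rintro rfl; omega
    simp only [hj.2, hj1, if_false]
  · intro j hj hj'
    have : j = i := by
      by_contra h
      simp [h] at hj hj'
      omega
    simp [this]

lemma u_form (n : ℕ) (hn : 3 ≤ n) [NeZero n] (p : Fin n → ℕ) (lam : Fin n → ℂ) (j : Fin n) :
    ∃ (t i : Fin n) (ε : ℂ), t ≠ j ∧ ε * ε = 1 ∧
      uElem n p lam i = ε • monS n p lam (eVec p j t) := by
  obtain ⟨h0, h1⟩ := val_zero_one n hn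
  have h01 : (0 : Fin n) ≠ 1 := fun h => by rw [h] at h0; omega
  by_cases hj0 : j = 0
  · subst hj0
    exact ⟨1, 1, 1, h01.symm, by ring, u_one n hn p lam⟩
  by_cases hj1 : j = 1
  · subst hj1
    exact ⟨0, 0, 1, h01, by ring, u_zero n hn p lam⟩
  have hj : 2 ≤ (j : ℕ) := by
    rw [Fin.ext_iff] at hj0 hj1
    omega
  exact ⟨1, j, -1, Ne.symm hj1, by ring, u_two n hn p lam j hj⟩

lemma u_form' (n : ℕ) (hn : 3 ≤ n) [NeZero n] (p : Fin n → ℕ) (lam : Fin n → ℂ) (i : Fin n) :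
    ∃ (j t : Fin n) (ε : ℂ), t ≠ j ∧ uElem n p lam i = ε • monS n p lam (eVec p j t) := by
  obtain ⟨h0, h1⟩ := val_zero_one n hn
  have h01 : (0 : Fin n) ≠ 1 := fun h => by rw [h] at h0; omega
  by_cases hj0 : i = 0
  · subst hj0
    exact ⟨1, 0, 1, h01, u_zero n hn p lam⟩
  by_cases hj1 : i = 1
  · subst hj1
    exact ⟨0, 1, 1, h01.symm, u_one n hn p lam⟩
  have hj : 2 ≤ (i : ℕ) := by
    rw [Fin.ext_iff] at hj0 hj1
    omega
  exact ⟨i, 1, -1, Ne.symm hj1, u_two n hn p lam i hj⟩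

lemma Gd_eVec {n : ℕ} (p : Fin n → ℕ) (j t : Fin n) (h : t ≠ j) : Gd p (p j) (eVec p j t) := by
  refine ⟨Pi.single t 1 - Pi.single j 1, by simp, fun i => ?_⟩
  by_cases h1 : i = j
  · subst h1; simp [eVec, Ne.symm h]
  by_cases h2 : i = t
  · subst h2; simp [eVec, h1]; ring
  · simp [eVec, h1, h2]

lemma core (n : ℕ) (hn : 3 ≤ n) [NeZero n] (p : Fin n → ℕ)
    (hp : ∀ i, 2 ≤ p i) (lam : Fin n → ℂ)
    (hlam0 : ∀ i : Fin n, 2 ≤ (i : ℕ) → lam i ≠ 0)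
    (hlamd : ∀ i j : Fin n, 2 ≤ (i : ℕ) → 2 ≤ (j : ℕ) → i ≠ j → lam i ≠ lam j)
    (M : Submodule ℂ (BAlg n p lam)) (k : ℤ) (hk : 0 < k)
    (hv : ∀ m, Gd p (k - 1) m → vElem n p lam * monS n p lam m ∈ M)
    (hu : ∀ i l, uElem n p lam i ^ l ∈ M) :
    ∀ (N : ℕ) (m : Fin n → ℕ), (Finset.univ.filter (fun i => m i = 0)).card = N →
      Gd p k m → monS n p lam m ∈ M := by
  intro N
  induction N using Nat.strong_induction_on with
  | _ N IH =>
  intro m hN hG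
  by_cases hz : ∀ i, m i ≠ 0
  · have hm : m = 1 + (m - 1) := by
      funext i
      have := hz i
      simp; omega
    rw [hm, monS_add, ← vElem_eq]
    apply hv
    obtain ⟨b, hb, hb'⟩ := hG
    refine ⟨b, hb, fun i => ?_⟩
    have h1 := hb' i
    have h2 := hz i
    simp only [Pi.sub_apply, Pi.one_apply]
    rw [Nat.cast_sub (by omega), h1]
    push_cast; ring
  push Not at hz
  obtain ⟨j, hj⟩ := hz
  obtain ⟨t, iu, ε, htj, hε, hue⟩ := u_form n hn p lam j
  have hpj : (0 : ℤ) < p j := by have := hp j; omega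
  obtain ⟨l, hl⟩ : ∃ l : ℕ, k = p j * l := by
    obtain ⟨b, hb, hb'⟩ := hG
    have h1 := hb' j
    rw [hj] at h1
    push_cast at h1
    have : 0 ≤ - b j := by nlinarith
    refine ⟨(-b j).toNat, ?_⟩
    rw [Int.toNat_of_nonneg this]; linarith
  let tv : Fin n → ℤ := l • (Pi.single t 1 - Pi.single j 1)
  have htvsum : ∑ i, tv i = 0 := by
    simp only [tv, Pi.smul_apply, ← Finset.smul_sum]; simp
  have inner : ∀ (D : ℕ) (m : Fin n → ℕ) (b : Fin n → ℤ),
      ∑ i, (b i - tv i).natAbs = D → m j = 0 →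
      (Finset.univ.filter (fun i => m i = 0)).card ≤ N →
      ∑ i, b i = 0 → (∀ i, (m i : ℤ) = k + p i * b i) → monS n p lam m ∈ M := by
    intro D
    induction D using Nat.strong_induction_on with
    | _ D IHD =>
    intro m b hD hmj hmN hb hb'
    have hbj : b j = tv j := by
      have h1 := hb' j
      rw [hmj, hl] at h1
      have h2 : (p j : ℤ) * (b j + l) = 0 := by push_cast at h1; linarith
      have h3 : b j + l = 0 := by
        rcases mul_eq_zero.mp h2 with h | h
        · omega
        · exact h
      have : tv j = - l := by simp [tv, Ne.symm htj]
      omega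
    by_cases hbt : b = tv
    · have hm : m = l • eVec p j t := by
        funext i
        zify
        rw [hb' i, hbt, hl]
        obtain ⟨_, h⟩ := Gd_eVec p j t htj
        by_cases h1 : i = j
        · subst h1; simp [eVec, tv, Ne.symm htj]
        by_cases h2 : i = t
        · subst h2; simp [eVec, tv, h1]; ring
        · simp [eVec, tv, h1, h2]; ring
      have : monS n p lam (eVec p j t) = ε • uElem n p lam iu := by
        rw [hue, smul_smul, hε, one_smul]
      rw [hm, ← monS_pow, this, smul_pow]
      exact M.smul_mem _ (hu _ _)
    obtain ⟨i, hi⟩ : ∃ i, tv i < b i := by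
      by_contra! h
      exact hbt (funext fun i => (Finset.sum_eq_sum_iff_of_le (fun i _ => h i)).mp
        (hb.trans htvsum.symm) i (Finset.mem_univ _))
    obtain ⟨i', hi'⟩ : ∃ i, b i < tv i := by
      by_contra! h
      exact hbt (funext fun i => ((Finset.sum_eq_sum_iff_of_le (fun i _ => h i)).mp
        (htvsum.trans hb.symm) i (Finset.mem_univ _)).symm)
    have hij : i ≠ j := by rintro rfl; omega
    have hi'j : i' ≠ j := by rintro rfl; omega
    have hii' : i ≠ i' := by rintro rfl; omega
    have hbi : 1 ≤ b i := by
      have : 0 ≤ tv i := by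
        by_cases h2 : i = t
        · subst h2; simp [tv, hij]
        · simp [tv, hij, h2]
      omega
    have hmi : p i < m i := by
      zify
      rw [hb' i]
      have : (p i : ℤ) * 1 ≤ p i * b i := by gcongr
      linarith
    obtain ⟨α, β, hT⟩ := T_rel n hn p lam hlam0 hlamd i i' j hi'j
    let m0 : Fin n → ℕ := m - Pi.single i (p i)
    have hm0 : m = m0 + Pi.single i (p i) := by
      funext r
      by_cases h : r = i
      · subst h; simp [m0]; omega
      · simp [m0, h]
    have hm0i : m0 i ≠ 0 := by simp [m0]; omega
    have hm0r : ∀ r, r ≠ i → m0 r = m r := fun r hr => by simp [m0, hr]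
    have hm0b : ∀ r, (m0 r : ℤ) = k + p r * (b r - (Pi.single i 1 : Fin n → ℤ) r) := by
      intro r
      have h1 := hb' r
      rw [hm0] at h1
      by_cases h : r = i
      · subst h; simp at h1 ⊢; linarith
      · simp [h] at h1 ⊢; linarith
    have hnew : ∀ q, ∀ r, (((m0 + Pi.single q (p q) : Fin n → ℕ) r : ℕ) : ℤ) =
        k + p r * (b - Pi.single i 1 + Pi.single q 1 : Fin n → ℤ) r := by
      intro q r
      have h1 := hm0b r
      by_cases h : r = q
      · subst h; simp at h1 ⊢; linarith
      · simp [h] at h1 ⊢; linarith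
    have hsum : ∀ q, ∑ r, (b - Pi.single i 1 + Pi.single q 1 : Fin n → ℤ) r = 0 := by
      intro q
      simp [Finset.sum_add_distrib, hb]
    rw [hm0, monS_add, hT, mul_add, mul_smul_comm, mul_smul_comm, ← monS_add, ← monS_add]
    have hsub : ∀ q, Finset.univ.filter (fun r => (m0 + Pi.single q (p q) : Fin n → ℕ) r = 0) ⊆
        Finset.univ.filter (fun r => m r = 0) := by
      intro q r
      simp only [Finset.mem_filter, Finset.mem_univ, true_and, Pi.add_apply]
      intro h
      by_cases hr : r = i
      · subst hr; omega
      · rw [← hm0r r hr]; omega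
    refine M.add_mem (M.smul_mem _ ?_) (M.smul_mem _ ?_)
    · refine IHD _ ?_ _ _ rfl ?_ ((Finset.card_le_card (hsub i')).trans hmN) (hsum i') (hnew i')
      · rw [← hD]
        refine Finset.sum_lt_sum (fun r _ => ?_) ⟨i, Finset.mem_univ _, ?_⟩
        · by_cases h : r = i
          · subst h; simp [hii']; omega
          · by_cases h2 : r = i'
            · subst h2; simp [h]; omega
            · simp [h, h2]
        · simp [hii']; omega
      · simp [hm0r j hij.symm, hmj, hi'j.symm]
    · refine IH _ ?_ _ rfl ⟨_, hsum j, hnew j⟩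
      refine lt_of_lt_of_le (Finset.card_lt_card ?_) hmN
      refine (Finset.ssubset_iff_of_subset (hsub j)).mpr ⟨j, by simpa using hmj, ?_⟩
      have := hp j
      simp; omega
  obtain ⟨b, hb, hb'⟩ := hG
  exact inner _ m b rfl hj hN.le hb hb'

lemma Gd_nonneg {n : ℕ} (hn : 3 ≤ n) (p : Fin n → ℕ) (hp : ∀ i, 2 ≤ p i) (k : ℤ)
    (m : Fin n → ℕ) (h : Gd p k m) : 0 ≤ k := by
  obtain ⟨b, hb, hb'⟩ := h
  by_contra! hk
  have hpos : ∀ i, 0 < b i := by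
    intro i
    have h1 := hb' i
    have h2 := hp i
    by_contra! h
    have : (p i : ℤ) * b i ≤ 0 := mul_nonpos_of_nonneg_of_nonpos (by omega) h
    omega
  have : 0 < ∑ i, b i := Finset.sum_pos (fun i _ => hpos i) ⟨⟨0, by omega⟩, Finset.mem_univ _⟩
  omega

lemma Gd_zero {n : ℕ} (p : Fin n → ℕ) (hp : ∀ i, 2 ≤ p i)
    (m : Fin n → ℕ) (h : Gd p 0 m) : m = 0 := by
  obtain ⟨b, hb, hb'⟩ := h
  have hpos : ∀ i, 0 ≤ b i := by
    intro i
    have h1 := hb' i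
    have h2 := hp i
    by_contra! h
    have : (p i : ℤ) * b i < 0 := mul_neg_of_pos_of_neg (by omega) h
    omega
  funext i
  have h0 := (Finset.sum_eq_zero_iff_of_nonneg (fun i _ => hpos i)).mp hb i (Finset.mem_univ _)
  have := hb' i
  rw [h0] at this
  simpa using this

lemma Gd_add {n : ℕ} (p : Fin n → ℕ) (k k' : ℤ) (m m' : Fin n → ℕ) (h : Gd p k m)
    (h' : Gd p k' m') : Gd p (k + k') (m + m') := by
  obtain ⟨b, hb, hb'⟩ := h
  obtain ⟨c, hc, hc'⟩ := h'
  refine ⟨b + c, by simp [Finset.sum_add_distrib, hb, hc], fun i => ?_⟩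
  simp [hb' i, hc' i]; ring

lemma Gd_one {n : ℕ} (p : Fin n → ℕ) : Gd p 1 1 := ⟨0, by simp, by simp⟩

lemma Gd_z {n : ℕ} (p : Fin n → ℕ) : Gd p 0 0 := ⟨0, by simp, by simp⟩

lemma SVer_mul (n : ℕ) [NeZero n] (p : Fin n → ℕ) (lam : Fin n → ℂ) (x y : BAlg n p lam)
    (hx : x ∈ SVerB n p lam (∑ i, egen p i)) (hy : y ∈ SVerB n p lam (∑ i, egen p i)) :
    x * y ∈ SVerB n p lam (∑ i, egen p i) := by
  rw [SVer_eq] at *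
  have h := Submodule.mul_mem_mul hx hy
  rw [Submodule.span_mul_span] at h
  refine Submodule.span_mono ?_ h
  rintro _ ⟨_, ⟨k, m, hm, rfl⟩, _, ⟨k', m', hm', rfl⟩, rfl⟩
  exact ⟨k + k', m + m', Gd_add p k k' m m' hm hm', (monS_add n p lam m m').symm⟩

lemma adjoin_le_SVer (n : ℕ) (hn : 3 ≤ n) [NeZero n] (p : Fin n → ℕ) (lam : Fin n → ℂ)
    (x : BAlg n p lam)
    (hx : x ∈ Algebra.adjoin ℂ (insert (vElem n p lam) (Set.range (uElem n p lam)))) :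
    x ∈ SVerB n p lam (∑ i, egen p i) := by
  have hmon : ∀ k m, Gd p k m → monS n p lam m ∈ SVerB n p lam (∑ i, egen p i) := by
    intro k m h
    rw [SVer_eq]
    exact Submodule.subset_span ⟨k, m, h, rfl⟩
  induction hx using Algebra.adjoin_induction with
  | mem x hx =>
    rcases hx with rfl | ⟨i, rfl⟩
    · rw [vElem_eq]; exact hmon 1 _ (Gd_one p)
    · obtain ⟨j, t, ε, h, h'⟩ := u_form' n hn p lam i
      rw [h']
      exact Submodule.smul_mem _ _ (hmon _ _ (Gd_eVec p j t h))
  | algebraMap r =>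
    rw [Algebra.algebraMap_eq_smul_one]
    refine Submodule.smul_mem _ _ ?_
    have := hmon 0 0 (Gd_z p)
    simpa [monS] using this
  | add x y _ _ hx hy => exact Submodule.add_mem _ hx hy
  | mul x y _ _ hx hy => exact SVer_mul n p lam x y hx hy

end VeroneseProof

/-- (1) The Veronese subring `S^s` (for `s = e₁ + ⋯ + eₙ`) is the
`ℂ`-subalgebra of `S` generated by `𝗏, 𝗎₁, …, 𝗎ₙ`.  (2) The quotient `S^s/𝗏S^s` is
spanned by the images of the powers `𝗎ᵢ^ℓ`. -/
theorem veronese_generation (n : ℕ) (hn : 3 ≤ n) [NeZero n] (p : Fin n → ℕ)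
    (hp : ∀ i, 2 ≤ p i) (lam : Fin n → ℂ)
    (hlam0 : ∀ i : Fin n, 2 ≤ (i : ℕ) → lam i ≠ 0)
    (hlamd : ∀ i j : Fin n, 2 ≤ (i : ℕ) → 2 ≤ (j : ℕ) → i ≠ j → lam i ≠ lam j) :
    Subalgebra.toSubmodule
        (Algebra.adjoin ℂ (insert (vElem n p lam) (Set.range (uElem n p lam)))) =
      SVerB n p lam (∑ i, egen p i) ∧
    SVerB n p lam (∑ i, egen p i) =
      Submodule.span ℂ
          { w | ∃ g ∈ SVerB n p lam (∑ i, egen p i), w = vElem n p lam * g } ⊔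
        Submodule.span ℂ { w | ∃ (i : Fin n) (l : ℕ), w = uElem n p lam i ^ l } := by
  have hA : ∀ x ∈ SVerB n p lam (∑ i, egen p i),
      x ∈ Algebra.adjoin ℂ (insert (vElem n p lam) (Set.range (uElem n p lam))) := by
    set A := Algebra.adjoin ℂ (insert (vElem n p lam) (Set.range (uElem n p lam))) with hAdef
    have hvA : vElem n p lam ∈ A := Algebra.subset_adjoin (Set.mem_insert _ _)
    have huA : ∀ i, uElem n p lam i ∈ A := fun i =>
      Algebra.subset_adjoin (Set.mem_insert_of_mem _ ⟨i, rfl⟩)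
    have hmon : ∀ (k : ℕ) (m : Fin n → ℕ), Gd p k m → monS n p lam m ∈ A := by
      intro k
      induction k with
      | zero =>
        intro m hm
        rw [Gd_zero p hp m (by simpa using hm)]
        simpa [monS] using A.one_mem
      | succ k ih =>
        intro m hm
        refine core n hn p hp lam hlam0 hlamd (Subalgebra.toSubmodule A) ((k + 1 : ℕ) : ℤ)
          (by positivity) ?_ ?_ _ m rfl hm
        · intro m' hm'
          exact A.mul_mem hvA (ih m' (by simpa using hm'))
        · intro i l
          exact A.pow_mem (huA i) l
    intro x hx
    rw [SVer_eq] at hx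
    have : Submodule.span ℂ { w | ∃ (k : ℤ) (m : Fin n → ℕ), Gd p k m ∧ w = monS n p lam m } ≤
        Subalgebra.toSubmodule A := by
      rw [Submodule.span_le]
      rintro _ ⟨k, m, hm, rfl⟩
      have hk := Gd_nonneg hn p hp k m hm
      lift k to ℕ using hk
      exact hmon k m hm
    exact this hx
  refine ⟨le_antisymm (fun x hx => adjoin_le_SVer n hn p lam x hx) (fun x hx => hA x hx), ?_⟩
  apply le_antisymm
  · conv_lhs => rw [SVer_eq]
    rw [Submodule.span_le]
    rintro _ ⟨k, m, hm, rfl⟩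
    have hk := Gd_nonneg hn p hp k m hm
    have hu : ∀ (i : Fin n) (l : ℕ), uElem n p lam i ^ l ∈ Submodule.span ℂ
          { w | ∃ g ∈ SVerB n p lam (∑ i, egen p i), w = vElem n p lam * g } ⊔
        Submodule.span ℂ { w | ∃ (i : Fin n) (l : ℕ), w = uElem n p lam i ^ l } := fun i l =>
      Submodule.mem_sup_right (Submodule.subset_span ⟨i, l, rfl⟩)
    rcases hk.eq_or_lt with rfl | hk
    · rw [Gd_zero p hp m hm]
      simpa [monS] using hu 0 0
    · refine core n hn p hp lam hlam0 hlamd _ k hk ?_ hu _ m rfl hm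
      intro m' hm'
      refine Submodule.mem_sup_left (Submodule.subset_span ⟨_, ?_, rfl⟩)
      rw [SVer_eq]
      exact Submodule.subset_span ⟨_, _, hm', rfl⟩
  · refine sup_le (Submodule.span_le.mpr ?_) (Submodule.span_le.mpr ?_)
    · rintro _ ⟨g, hg, rfl⟩
      refine SVer_mul n p lam _ _ (adjoin_le_SVer n hn p lam _ ?_) hg
      exact Algebra.subset_adjoin (Set.mem_insert _ _)
    · rintro _ ⟨i, l, rfl⟩
      refine adjoin_le_SVer n hn p lam _ (Subalgebra.pow_mem _ ?_ l)
      exact Algebra.subset_adjoin (Set.mem_insert_of_mem _ ⟨i, rfl⟩)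
end
end
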